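/- arXiv:2407.17147 — 2 statements merged into one kernel-verified Lean document; each statement's English description precedes it below -/
import Mathlib

section
/- For every finite acyclic quiver Q and every Artin algebra Λ, the monomorphism category mono(Q,Λ) is a functorially finite torsion-free class of mod ΛQ; that is, it is closed under extensions and under submodules in mod ΛQ, and it is both contravariantly finite and covariantly finite in mod ΛQ. -/
/-! Basic framework: representations of a quiver over a ring. -/

namespace QuivRep

/-- A representation of a quiver `V` over a ring `Λ`. -/
structure Repn (Λ : Type) [Ring Λ] (V : Type) [Quiver.{1} V] where
  M : V → Type
  [acg : ∀ i, AddCommGroup (M i)]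
  [mod : ∀ i, Module Λ (M i)]
  h : ∀ {i j : V}, (i ⟶ j) → (M i →ₗ[Λ] M j)

attribute [instance] Repn.acg Repn.mod

variable {Λ : Type} [Ring Λ] {V : Type} [Quiver.{1} V]

/-- A morphism of representations. -/
@[ext]
structure RepHom (X Y : Repn Λ V) where
  app : ∀ i, X.M i →ₗ[Λ] Y.M i
  comm : ∀ {i j : V} (a : i ⟶ j), (Y.h a).comp (app i) = (app j).comp (X.h a)

namespace RepHom

def id (X : Repn Λ V) : RepHom X X :=
  ⟨fun _ => LinearMap.id, fun _ => rfl⟩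

def comp {X Y Z : Repn Λ V} (g : RepHom Y Z) (f : RepHom X Y) : RepHom X Z :=
  ⟨fun i => (g.app i).comp (f.app i), fun a => by
    rw [← LinearMap.comp_assoc, g.comm a, LinearMap.comp_assoc, f.comm a,
      LinearMap.comp_assoc]⟩

instance (X Y : Repn Λ V) : Zero (RepHom X Y) :=
  ⟨⟨fun _ => 0, fun a => by simp⟩⟩

end RepHom

/-- Isomorphism of representations. -/
def RepIso (X Y : Repn Λ V) : Prop :=
  ∃ (f : RepHom X Y) (g : RepHom Y X), g.comp f = RepHom.id X ∧ f.comp g = RepHom.id Y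

/-- The zero representation predicate. -/
def Repn.IsZero (X : Repn Λ V) : Prop := ∀ i, Subsingleton (X.M i)

/-- Indecomposability, via idempotent endomorphisms. -/
def Repn.Indec (X : Repn Λ V) : Prop :=
  ¬ X.IsZero ∧ ∀ e : RepHom X X, e.comp e = e → e = RepHom.id X ∨ e = 0

/-- Finitely generated (pointwise) representations. -/
def Repn.FG (X : Repn Λ V) : Prop := ∀ i, Module.Finite Λ (X.M i)

variable [Fintype V] [∀ i j : V, Fintype (i ⟶ j)]

/-- The canonical map `⊕_{α : t(α) = i} M_{s(α)} → M_i` of a representation. -/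
noncomputable def Repn.inMap (X : Repn Λ V) (i : V) :
    ((a : Σ j : V, j ⟶ i) → X.M a.1) →ₗ[Λ] X.M i :=
  ∑ a : (Σ j : V, j ⟶ i), (X.h a.2).comp (LinearMap.proj a)

/-- The (separated) monomorphism condition. -/
def Repn.IsMonoRep (X : Repn Λ V) : Prop := ∀ i : V, Function.Injective (X.inMap i)

/-- A quiver is acyclic if it has no nontrivial cycles. -/
def IsAcyclic (V : Type) [Quiver.{1} V] : Prop :=
  ∀ (i : V) (p : Quiver.Path i i), p = Quiver.Path.nil

/-- `f, g` form a short exact sequence of representations (computed vertexwise). -/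
def IsSES {X Y Z : Repn Λ V} (f : RepHom X Y) (g : RepHom Y Z) : Prop :=
  (∀ i, Function.Injective (f.app i)) ∧ (∀ i, Function.Surjective (g.app i)) ∧
    (∀ i, LinearMap.range (f.app i) = LinearMap.ker (g.app i))

end QuivRep

/-!
Over a commutative Artinian ring every finitely generated module embeds in a finitely generated
injective one: an essential extension `E` of `N` has its socle inside `N`, and a module with
Noetherian `J`-torsion (`J` the Jacobson radical) has Noetherian `J ^ n`-torsion for all `n`, which
is everything once `J ^ n = 0`. Coinduction `Hom_R(Λ, -)` carries this over to an Artin algebra.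

Monomorphic representations are closed under products and subobjects, so the quotient of `X` by
the common kernel of all maps from `X` to monomorphic representations is a left approximation.
A right approximation of `Y` is built along the arrows: at the vertex `i` take
`X i = Y i × ∏_{k → i} W k`, where `W k` is a finitely generated injective module containing `X k`,
and let an arrow `k → i` embed `X k` in its own factor `W k`. Injectivity of the `W k` lifts any map
from a monomorphic representation to `Y`, one vertex at a time.
-/

universe u v w

theorem exists_forall_of_wellFounded {α : Type*} {r : α → α → Prop} (hr : WellFounded r)
    {C : α → Type*} {P : ∀ i, (∀ k, r k i → C k) → C i → Prop} (hP : ∀ i f, ∃ c, P i f c) :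
    ∃ f : ∀ i, C i, ∀ i, P i (fun k _ => f k) (f i) := by
  choose F hF using hP
  exact ⟨hr.fix F, fun i => (hr.fix_eq F i).symm ▸ hF i _⟩

/-- An element `b` is an essential extension of `a ≤ b` if no nonzero element below
`b` is disjoint from `a`. Applied to lattices of submodules, this is the usual notion. -/
def IsEssentialExtension {α : Type*} [PartialOrder α] [OrderBot α] (a b : α) : Prop :=
  a ≤ b ∧ ∀ c ≤ b, Disjoint a c → c = ⊥

section Lattice

variable {α : Type*}

theorem exists_maximal_disjoint [CompleteLattice α] [IsCompactlyGenerated α] (a : α) :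
    ∃ b, Maximal (Disjoint a) b :=
  zorn_le₀ {b | Disjoint a b} fun s hs hchain =>
    ⟨sSup s, hchain.directedOn.disjoint_sSup_right.2 hs, fun _ => le_sSup⟩

namespace IsEssentialExtension

theorem refl [PartialOrder α] [OrderBot α] (a : α) : IsEssentialExtension a a :=
  ⟨le_rfl, fun _ hc hac => hac.eq_bot_of_ge hc⟩

theorem trans [SemilatticeInf α] [OrderBot α] {a b c : α} (hab : IsEssentialExtension a b)
    (hbc : IsEssentialExtension b c) : IsEssentialExtension a c := by
  refine ⟨hab.1.trans hbc.1, fun d hdc had => hbc.2 d hdc (disjoint_iff.2 ?_)⟩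
  exact hab.2 _ inf_le_left (had.mono_right inf_le_right)

theorem le_of_complementedLattice [Lattice α] [OrderBot α] {a b c : α}
    (hab : IsEssentialExtension a b) (hcb : c ≤ b) [ComplementedLattice (Set.Iic c)] : c ≤ a := by
  obtain ⟨⟨d, hdc⟩, hd⟩ := exists_isCompl (⟨a ⊓ c, inf_le_right⟩ : Set.Iic c)
  have had : Disjoint a d := by
    have hdisj : a ⊓ c ⊓ d = ⊥ := congrArg Subtype.val hd.inf_eq_bot
    rwa [inf_assoc, inf_eq_right.2 hdc, ← disjoint_iff] at hdisj
  have hsup : a ⊓ c ⊔ d = c := congrArg Subtype.val hd.sup_eq_top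
  rw [hab.2 d (hdc.trans hcb) had, sup_bot_eq] at hsup
  exact inf_eq_right.1 hsup

end IsEssentialExtension

theorem exists_maximal_isEssentialExtension [CompleteLattice α] [IsCompactlyGenerated α] (a : α) :
    ∃ b, Maximal (IsEssentialExtension a) b := by
  suffices hub : ∀ s ⊆ {b | IsEssentialExtension a b}, IsChain (· ≤ ·) s → ∀ b ∈ s,
      IsEssentialExtension a (sSup s) by
    obtain ⟨b, -, hb⟩ := zorn_le_nonempty₀ {b | IsEssentialExtension a b}
      (fun s hs hchain b hb => ⟨sSup s, hub s hs hchain b hb, fun _ => le_sSup⟩) a (.refl a)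
    exact ⟨b, hb⟩
  refine fun s hs hchain b hb => ⟨(hs hb).1.trans (le_sSup hb), fun c hc hac => ?_⟩
  rw [← inf_eq_left.2 hc, hchain.directedOn.inf_sSup_eq, iSup₂_eq_bot]
  exact fun d hd => (hs hd).2 _ inf_le_right (hac.mono_right inf_le_left)

end Lattice

section InjectiveHull

variable {R : Type u} [Ring R] {I : Type v} [AddCommGroup I] [Module R I]

theorem exists_linearMap_eqOn_id_and_le_ker [Module.Injective R I] {E C : Submodule R I}
    (hEC : Disjoint E C) : ∃ f : I →ₗ[R] I, (∀ x ∈ E, f x = x) ∧ C ≤ LinearMap.ker f := by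
  have hinj : Function.Injective (C.mkQ ∘ₗ E.subtype) := by
    rw [← LinearMap.ker_eq_bot, LinearMap.ker_comp, Submodule.ker_mkQ]
    exact Submodule.disjoint_iff_comap_eq_bot.1 hEC
  obtain ⟨g, hg⟩ := Module.Injective.out _ hinj E.subtype
  exact ⟨g ∘ₗ C.mkQ, fun x hx => hg ⟨x, hx⟩, (Submodule.ker_mkQ C).ge.trans
    (LinearMap.ker_le_ker_comp _ _)⟩

theorem isEssentialExtension_range_of_maximal_disjoint {E C : Submodule R I}
    (hC : Maximal (Disjoint E) C) {f : I →ₗ[R] I} (hf : ∀ x ∈ E, f x = x)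
    (hfC : C ≤ LinearMap.ker f) : IsEssentialExtension E (LinearMap.range f) := by
  refine ⟨fun x hx => ⟨x, hf x hx⟩, fun N hN hEN => ?_⟩
  have hdisj : Disjoint E (N.comap f) := by
    rw [Submodule.disjoint_def] at hEN ⊢
    exact fun x hx hxN => hEN x hx (by simpa [hf x hx] using hxN)
  have hle : N.comap f ≤ C := hC.2 hdisj (hfC.trans (Submodule.comap_mono bot_le))
  rw [← Submodule.map_comap_eq_of_le hN, eq_bot_iff, Submodule.map_le_iff_le_comap]
  exact hle.trans hfC

theorem exists_isProj_of_maximal_isEssentialExtension [Module.Injective R I] {M E : Submodule R I}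
    (hE : Maximal (IsEssentialExtension M) E) : ∃ f : I →ₗ[R] I, LinearMap.IsProj E f := by
  obtain ⟨C, hC⟩ := exists_maximal_disjoint E
  obtain ⟨f, hf, hfC⟩ := exists_linearMap_eqOn_id_and_le_ker hC.1
  have hess := isEssentialExtension_range_of_maximal_disjoint hC hf hfC
  have hrange : LinearMap.range f ≤ E := hE.2 (hE.1.trans hess) hess.1
  exact ⟨f, fun x => hrange ⟨x, rfl⟩, hf⟩

theorem module_injective_of_isProj [Module.Injective R I] {E : Submodule R I}
    {f : I →ₗ[R] I} (hf : LinearMap.IsProj E f) : Module.Injective R E := by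
  refine ⟨fun X Y _ _ _ _ i hi g => ?_⟩
  obtain ⟨h, hh⟩ := Module.Injective.out i hi (E.subtype ∘ₗ g)
  refine ⟨hf.codRestrict ∘ₗ h, fun x => Subtype.ext ?_⟩
  simp [hh]

theorem IsEssentialExtension.comap_subtype {M E : Submodule R I}
    (hME : IsEssentialExtension M E) : IsEssentialExtension (M.comap E.subtype) ⊤ := by
  refine ⟨le_top, fun L _ hL => ?_⟩
  have hdisj := Submodule.disjoint_map E.subtype_injective hL
  rw [Submodule.map_comap_subtype, inf_eq_right.2 hME.1] at hdisj
  exact Submodule.map_injective_of_injective E.subtype_injective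
    ((hME.2 _ (Submodule.map_subtype_le _ _) hdisj).trans (Submodule.map_bot _).symm)

theorem exists_injective_isEssentialExtension [Small.{v} R] (M : Type v) [AddCommGroup M]
    [Module R M] : ∃ (E : ModuleCat.{v} R) (ι : M →ₗ[R] E),
      Module.Injective R E ∧ Function.Injective ι ∧ IsEssentialExtension (LinearMap.range ι) ⊤ := by
  obtain ⟨P⟩ := CategoryTheory.EnoughInjectives.presentation (ModuleCat.of R M)
  have : Module.Injective R P.J :=
    have := P.injective
    Module.injective_module_of_injective_object R P.J
  have hP : Function.Injective P.f.hom := (ModuleCat.mono_iff_injective P.f).1 P.mono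
  obtain ⟨E, hE⟩ := exists_maximal_isEssentialExtension (LinearMap.range P.f.hom)
  obtain ⟨f, hf⟩ := exists_isProj_of_maximal_isEssentialExtension hE
  refine ⟨.of R E, P.f.hom.codRestrict E fun x => hE.1.1 ⟨x, rfl⟩, module_injective_of_isProj hf,
    (LinearMap.injective_codRestrict_iff ..).2 hP, ?_⟩
  rw [LinearMap.range_codRestrict]
  exact hE.1.comap_subtype

end InjectiveHull

section CommRing

open Submodule

variable {R : Type u} {M : Type v} [CommRing R] [AddCommGroup M] [Module R M]

theorem isNoetherian_torsionBySet_pow {J : Ideal R} (hJ : J.FG)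
    [IsNoetherian R (torsionBySet R M J)] (n : ℕ) :
    IsNoetherian R (torsionBySet R M (J ^ n : Ideal R)) := by
  induction n with
  | zero =>
    rw [show torsionBySet R M (J ^ 0 : Ideal R) = ⊥ by simp]
    infer_instance
  | succ n ih =>
    obtain ⟨s, rfl⟩ := hJ
    let f : torsionBySet R M (span R (s : Set R) ^ (n + 1) : Ideal R) →ₗ[R]
        s → torsionBySet R M (span R (s : Set R) ^ n : Ideal R) :=
      LinearMap.pi fun r => ((r : R) • LinearMap.id).restrict fun x hx => by
        rw [mem_torsionBySet_iff] at hx ⊢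
        rintro ⟨a, ha⟩
        simpa [mul_smul] using
          hx ⟨a * r, pow_succ (span R (s : Set R)) n ▸ Ideal.mul_mem_mul ha (subset_span r.2)⟩
    have hker : (LinearMap.ker f).map (Submodule.subtype _) ≤
        torsionBySet R M (span R (s : Set R)) := by
      rintro _ ⟨x, hx, rfl⟩
      rw [← torsionBySet_eq_torsionBySet_span, mem_torsionBySet_iff]
      exact fun r => congrArg Subtype.val (congrFun hx r)
    have := isNoetherian_of_le hker
    have : IsNoetherian R (LinearMap.ker f) := isNoetherian_of_linearEquiv
      (equivMapOfInjective _ (subtype_injective _) (LinearMap.ker f)).symm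
    exact isNoetherian_of_range_eq_ker (LinearMap.ker f).subtype f (by simp)

theorem torsionBySet_jacobson_le [IsSemiprimaryRing R] {N : Submodule R M}
    (hN : IsEssentialExtension N ⊤) : torsionBySet R M (Ring.jacobson R) ≤ N := by
  have : IsSemisimpleModule R (torsionBySet R M (Ring.jacobson R)) :=
    (torsionBySet_isTorsionBySet _).isSemisimpleModule_iff.1 inferInstance
  have : ComplementedLattice (Set.Iic (torsionBySet R M (Ring.jacobson R))) :=
    (mapIic _).complementedLattice_iff.1 inferInstance
  exact hN.le_of_complementedLattice le_top

theorem IsEssentialExtension.isNoetherian [IsArtinianRing R] {N : Submodule R M}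
    [IsNoetherian R N] (hN : IsEssentialExtension N ⊤) : IsNoetherian R M := by
  obtain ⟨n, hn⟩ := IsSemiprimaryRing.isNilpotent (R := R)
  have := isNoetherian_of_le (torsionBySet_jacobson_le hN)
  have hpow := isNoetherian_torsionBySet_pow (M := M) (IsNoetherian.noetherian (Ring.jacobson R)) n
  rwa [hn, show torsionBySet R M (0 : Ideal R) = ⊤ by simp [eq_top_iff'],
    isNoetherian_top_iff] at hpow

end CommRing

/-- Every finitely generated `R`-module embeds in a finitely generated injective `R`-module; the
second universe parameter is that of the modules. -/
def HasFiniteInjectiveEmbeddings (R : Type u) [Ring R] : Prop :=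
  ∀ (M : ModuleCat.{v} R) [Module.Finite R M], ∃ (E : ModuleCat.{v} R) (ι : M →ₗ[R] E),
    Module.Finite R E ∧ Module.Injective R E ∧ Function.Injective ι

theorem HasFiniteInjectiveEmbeddings.of_isArtinianRing (R : Type u) [CommRing R] [IsArtinianRing R]
    [Small.{v} R] : HasFiniteInjectiveEmbeddings.{u, v} R := by
  intro M _
  obtain ⟨E, ι, hE, hι, hess⟩ := exists_injective_isEssentialExtension (R := R) M
  have := hess.isNoetherian
  exact ⟨E, ι, inferInstance, hE, hι⟩

section Coinduction

open CategoryTheory ModuleCat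

theorem injective_coextendScalars {R : Type u} {Λ : Type v} [Ring R] [Ring Λ] (f : R →+* Λ)
    (E : ModuleCat.{max v w} R) [Injective E] : Injective ((coextendScalars f).obj E) :=
  Injective.injective_of_adjoint (restrictCoextendScalarsAdj.{w} f) E

variable {R : Type u} {Λ : Type v} [CommRing R] [Ring Λ] [Algebra R Λ] [Module.Finite R Λ]

theorem finite_restrictScalars (M : ModuleCat.{w} Λ) [Module.Finite Λ M] :
    Module.Finite R ((restrictScalars (algebraMap R Λ)).obj M) := by
  let _ : Module R M := Module.compHom M (algebraMap R Λ)
  have : IsScalarTower R Λ M := .of_algebraMap_smul fun _ _ => rfl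
  have : Module.Finite R M := .trans Λ M
  exact this

variable [IsNoetherianRing R]

theorem finite_coextendScalars (E : ModuleCat.{max v w} R) [Module.Finite R E] :
    Module.Finite Λ ((coextendScalars (algebraMap R Λ)).obj E) := by
  let X := (coextendScalars (algebraMap R Λ)).obj E
  let toHom (g : X) := CoextendScalars.equiv (algebraMap R Λ) E g
  let _ : Module R X := Module.compHom X (algebraMap R Λ)
  have : IsScalarTower R Λ X := .of_algebraMap_smul fun _ _ => rfl
  let e : X →ₗ[R] Λ →ₗ[R] E :=
    { toFun g :=
        { toFun x := toHom g x
          map_add' := (toHom g).map_add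
          map_smul' r x := by
            rw [Algebra.smul_def]
            exact (toHom g).map_smul r x }
      map_add' _ _ := rfl
      map_smul' r g := by
        ext x
        change toHom g (x * algebraMap R Λ r) = r • toHom g x
        rw [← Algebra.commutes]
        exact (toHom g).map_smul r x }
  have he : Function.Injective e := fun g g' h =>
    CoextendScalars.ext (LinearMap.ext fun x => LinearMap.congr_fun h x)
  have : Module.Finite R X := .of_injective e he
  exact .of_restrictScalars_finite R Λ X

theorem HasFiniteInjectiveEmbeddings.of_finite_algebra
    (hR : HasFiniteInjectiveEmbeddings.{u, max v w} R) :
    HasFiniteInjectiveEmbeddings.{v, max v w} Λ := by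
  intro M _
  let M' := (restrictScalars (algebraMap R Λ)).obj M
  have := finite_restrictScalars (R := R) M
  obtain ⟨E, ι, hfin, hinj, hι⟩ := hR M'
  let j := (restrictCoextendScalarsAdj.{w} (algebraMap R Λ)).homEquiv M E (ofHom (X := M') ι)
  have := Module.injective_object_of_injective_module R E
  have := injective_coextendScalars.{u, v, w} (algebraMap R Λ) E
  refine ⟨_, j.hom, finite_coextendScalars E, Module.injective_module_of_injective_object _ _,
    fun m m' hm => hι ?_⟩
  have hj (m : M) : CoextendScalars.equiv (algebraMap R Λ) E (j.hom m) (1 : Λ) = ι m :=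
    congrArg ι (one_smul Λ m)
  rw [← hj, hm, hj]

end Coinduction

namespace QuivRep

theorem IsAcyclic.wellFounded {V : Type} [Quiver.{1} V] [Finite V] (hV : IsAcyclic V) :
    WellFounded fun k i : V => Nonempty (k ⟶ i) := by
  let r (k i : V) : Prop := ∃ p : Quiver.Path k i, p.length ≠ 0
  have : IsTrans V r := ⟨fun _ _ _ ⟨p, hp⟩ ⟨q, _⟩ => ⟨p.comp q, by simp [hp]⟩⟩
  have : Std.Irrefl r := ⟨fun i ⟨p, hp⟩ => hp (hV i p ▸ rfl)⟩
  exact Subrelation.wf (fun {k i} ⟨a⟩ => ⟨a.toPath, one_ne_zero⟩)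
    (Finite.wellFounded_of_trans_of_irrefl r)

variable {Λ : Type} [Ring Λ] {V : Type} [Quiver.{1} V] {X Y Z : Repn Λ V}

theorem RepHom.comm_apply (f : RepHom X Y) {i j : V} (a : i ⟶ j) (x : X.M i) :
    Y.h a (f.app i x) = f.app j (X.h a x) :=
  LinearMap.congr_fun (f.comm a) x

/-- `g : X ⟶ Y` is a right approximation of `Y` by the class `C`. -/
def IsRightApproximation (C : Repn Λ V → Prop) (g : RepHom X Y) : Prop :=
  C X ∧ ∀ X', C X' → ∀ g' : RepHom X' Y, ∃ φ : RepHom X' X, g.comp φ = g'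

/-- `g : X ⟶ Y` is a left approximation of `X` by the class `C`. -/
def IsLeftApproximation (C : Repn Λ V → Prop) (g : RepHom X Y) : Prop :=
  C Y ∧ ∀ Y', C Y' → ∀ g' : RepHom X Y', ∃ φ : RepHom Y Y', φ.comp g = g'

section Quotient

variable (X) (N : ∀ i, Submodule Λ (X.M i))

/-- The quotient of a representation by a subrepresentation, given as a family of submodules
stable under the arrows. -/
def Repn.quotient (hN : ∀ {i j : V} (a : i ⟶ j), N i ≤ (N j).comap (X.h a)) : Repn Λ V where
  M i := X.M i ⧸ N i
  h a := (N _).mapQ (N _) (X.h a) (hN a)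

variable {X N} {hN : ∀ {i j : V} (a : i ⟶ j), N i ≤ (N j).comap (X.h a)}

/-- The projection onto a quotient representation. -/
def Repn.quotientMk : RepHom X (X.quotient N hN) where
  app i := (N i).mkQ
  comm a := (N _).mapQ_mkQ (N _) (X.h a) (h := hN a)

theorem Repn.FG.quotient (hX : X.FG) : (X.quotient N hN).FG := fun i =>
  have := hX i
  inferInstanceAs (Module.Finite Λ (X.M i ⧸ N i))

theorem RepHom.exists_comp_quotientMk_eq (g : RepHom X Y)
    (hg : ∀ i, N i ≤ LinearMap.ker (g.app i)) :
    ∃ φ : RepHom (X.quotient N hN) Y, φ.comp Repn.quotientMk = g :=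
  ⟨{ app i := (N i).liftQ (g.app i) (hg i)
     comm a := Submodule.linearMap_qext _ (g.comm a) },
   RepHom.ext (funext fun i => (N i).liftQ_mkQ (g.app i) (hg i))⟩

end Quotient

section MonoCover

variable [∀ i j : V, Small.{0} (i ⟶ j)]

/-- The product `∏_{k → i} W k` over the arrows ending at `i`. The arrows live in `Type 1` and the
modules of a representation in `Type`, hence the `Shrink`. -/
abbrev ArrowProd (W : V → Type) [∀ i, AddCommGroup (W i)] (i : V) : Type :=
  Shrink.{0} ((b : Σ k : V, k ⟶ i) → W b.1)

variable {W : V → Type} [∀ i, AddCommGroup (W i)] [∀ i, Module Λ (W i)]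

variable (Λ W) in
/-- The identification of `ArrowProd W i` with the product it shrinks. -/
noncomputable abbrev arrowProdEquiv (i : V) :
    ArrowProd W i ≃ₗ[Λ] ((b : Σ k : V, k ⟶ i) → W b.1) :=
  Shrink.linearEquiv Λ _

variable (Y) (e : ∀ i, (Y.M i × ArrowProd W i) →ₗ[Λ] W i)

open Classical in
/-- The representation `X i = Y i × ∏_{k → i} W k`, where an arrow `a : k → i` acts by `Y.h a` on
the first factor and by `e k : X k → W k` into the factor of the product indexed by `a`. -/
noncomputable def Repn.monoCover : Repn Λ V where
  M i := Y.M i × ArrowProd W i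
  h {i j} a := (Y.h a ∘ₗ .fst ..).prod ((arrowProdEquiv Λ W j).symm.toLinearMap ∘ₗ
    .single Λ (fun b : Σ k : V, k ⟶ j => W b.1) ⟨i, a⟩ ∘ₗ e i)

/-- The projection of `Y.monoCover e` onto `Y`. -/
noncomputable def Repn.monoCoverFst : RepHom (Y.monoCover e) Y where
  app _ := .fst ..
  comm _ := rfl

/-- The projection of `Y.monoCover e` at `i` onto `∏_{k → i} W k`; it is not a morphism of
representations. -/
noncomputable def Repn.monoCoverSnd (i : V) :
    (Y.monoCover e).M i →ₗ[Λ] (b : Σ k : V, k ⟶ i) → W b.1 :=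
  (arrowProdEquiv Λ W i).toLinearMap ∘ₗ .snd ..

variable {Y e}

theorem Repn.monoCover_ext {i : V} {y y' : (Y.monoCover e).M i}
    (hfst : (Y.monoCoverFst e).app i y = (Y.monoCoverFst e).app i y')
    (hsnd : Y.monoCoverSnd e i y = Y.monoCoverSnd e i y') : y = y' :=
  Prod.ext hfst ((arrowProdEquiv Λ W i).injective hsnd)

end MonoCover

section FiniteQuiver

variable [Finite V] [∀ i j : V, Finite (i ⟶ j)]

theorem Repn.FG.monoCover {W : V → Type} [∀ i, AddCommGroup (W i)] [∀ i, Module Λ (W i)]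
    {e : ∀ i, (Y.M i × ArrowProd W i) →ₗ[Λ] W i} [∀ i, Module.Finite Λ (W i)] (hY : Y.FG) :
    (Y.monoCover e).FG := fun i =>
  have := hY i
  have : Module.Finite Λ (ArrowProd W i) := .equiv (arrowProdEquiv Λ W i).symm
  inferInstanceAs (Module.Finite Λ (Y.M i × ArrowProd W i))

theorem exists_arrowProd_embedding (hΛ : HasFiniteInjectiveEmbeddings.{0, 0} Λ)
    (hV : IsAcyclic V) (hY : Y.FG) :
    ∃ (W : V → ModuleCat.{0} Λ) (e : ∀ i, (Y.M i × ArrowProd (W ·) i) →ₗ[Λ] W i),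
      ∀ i, Module.Finite Λ (W i) ∧ Module.Injective Λ (W i) ∧ Function.Injective (e i) := by
  have hrec (i : V) (W : ∀ k, Nonempty (k ⟶ i) → {W : ModuleCat.{0} Λ // Module.Finite Λ W}) :
      ∃ E : {E : ModuleCat.{0} Λ // Module.Finite Λ E}, Module.Injective Λ E.1 ∧
        ∃ e : (Y.M i × Shrink.{0} ((b : Σ k : V, k ⟶ i) → (W b.1 ⟨b.2⟩).1)) →ₗ[Λ] E.1,
          Function.Injective e := by
    have := hY i
    have (b : Σ k : V, k ⟶ i) := (W b.1 ⟨b.2⟩).2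
    have : Module.Finite Λ (Shrink.{0} ((b : Σ k : V, k ⟶ i) → (W b.1 ⟨b.2⟩).1)) :=
      .equiv (Shrink.linearEquiv Λ _).symm
    obtain ⟨E, e, hfin, hinj, he⟩ :=
      hΛ (.of Λ (Y.M i × Shrink.{0} ((b : Σ k : V, k ⟶ i) → (W b.1 ⟨b.2⟩).1)))
    exact ⟨⟨E, hfin⟩, hinj, e, he⟩
  obtain ⟨W, hW⟩ := exists_forall_of_wellFounded hV.wellFounded hrec
  choose hinj e he using hW
  exact ⟨fun i => (W i).1, e, fun i => ⟨(W i).2, hinj i, he i⟩⟩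

end FiniteQuiver

section MonoRep

variable [Fintype V] [∀ i j : V, Fintype (i ⟶ j)]

theorem Repn.inMap_apply (X : Repn Λ V) (i : V) (x : (a : Σ j : V, j ⟶ i) → X.M a.1) :
    X.inMap i x = ∑ a : Σ j : V, j ⟶ i, X.h a.2 (x a) := by
  simp [inMap]

theorem RepHom.app_inMap (f : RepHom X Y) (i : V) (x : (a : Σ j : V, j ⟶ i) → X.M a.1) :
    f.app i (X.inMap i x) = Y.inMap i fun a => f.app a.1 (x a) := by
  simp [Repn.inMap_apply, f.comm_apply]

theorem Repn.inMap_single [∀ i, DecidableEq (Σ k : V, k ⟶ i)] {k i : V} (a : k ⟶ i)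
    (x : X.M k) : X.inMap i (Pi.single ⟨k, a⟩ x) = X.h a x := by
  rw [inMap_apply, Fintype.sum_eq_single ⟨k, a⟩, Pi.single_eq_same]
  intro b hb
  rw [Pi.single_eq_of_ne hb, map_zero]

/-- A family of linear maps commuting with the canonical maps `inMap` is a morphism. -/
def RepHom.ofInMap (φ : ∀ i, X.M i →ₗ[Λ] Y.M i)
    (h : ∀ i x, φ i (X.inMap i x) = Y.inMap i fun a => φ a.1 (x a)) : RepHom X Y where
  app := φ
  comm {k i} a := by
    classical
    ext x
    have hx := h i (Pi.single ⟨k, a⟩ x)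
    rw [Repn.inMap_single] at hx
    rw [LinearMap.comp_apply, LinearMap.comp_apply, hx, ← Repn.inMap_single]
    exact congrArg _ <| funext fun b =>
      (Pi.apply_single _ (fun b => (φ b.1).map_zero) ⟨k, a⟩ x b).symm

theorem Repn.isMonoRep_iff :
    X.IsMonoRep ↔ ∀ i (x : (a : Σ j : V, j ⟶ i) → X.M a.1), X.inMap i x = 0 → x = 0 :=
  forall_congr' fun i => injective_iff_map_eq_zero (X.inMap i)

theorem Repn.IsMonoRep.of_injective (hY : Y.IsMonoRep) (f : RepHom X Y)
    (hf : ∀ i, Function.Injective (f.app i)) : X.IsMonoRep := fun i x x' hx => by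
  have hfx := congrArg (f.app i) hx
  rw [f.app_inMap, f.app_inMap] at hfx
  exact funext fun a => hf a.1 (congrFun (hY i hfx) a)

theorem IsSES.isMonoRep {f : RepHom X Y} {g : RepHom Y Z} (h : IsSES f g) (hX : X.IsMonoRep)
    (hZ : Z.IsMonoRep) : Y.IsMonoRep := by
  obtain ⟨hf, -, hfg⟩ := h
  refine Repn.isMonoRep_iff.2 fun i y hy => ?_
  have hgy (a : Σ j : V, j ⟶ i) : g.app a.1 (y a) = 0 := by
    refine congrFun (Repn.isMonoRep_iff.1 hZ i (fun a => g.app a.1 (y a)) ?_) a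
    rw [← g.app_inMap, hy, map_zero]
  choose x hx using fun a : Σ j : V, j ⟶ i => (hfg a.1).ge (hgy a)
  obtain rfl : (fun a => f.app a.1 (x a)) = y := funext hx
  rw [← f.app_inMap] at hy
  have hx0 : x = 0 := Repn.isMonoRep_iff.1 hX i x (hf i (hy.trans (map_zero _).symm))
  simp only [hx0, Pi.zero_apply, map_zero]
  rfl

section LeftApproximation

/-- The reject of the monomorphic representations in `X`: the common kernel of all morphisms from
`X` to them. -/
def Repn.monoReject (X : Repn Λ V) (i : V) : Submodule Λ (X.M i) :=
  ⨅ (Y : Repn Λ V) (_ : Y.IsMonoRep) (g : RepHom X Y), LinearMap.ker (g.app i)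

theorem Repn.mem_monoReject {i : V} {x : X.M i} :
    x ∈ X.monoReject i ↔ ∀ Y : Repn Λ V, Y.IsMonoRep → ∀ g : RepHom X Y, g.app i x = 0 := by
  simp [monoReject]

theorem Repn.monoReject_le_comap {i j : V} (a : i ⟶ j) :
    X.monoReject i ≤ (X.monoReject j).comap (X.h a) := fun x hx =>
  mem_monoReject.2 fun Y hY g => by
    rw [← g.comm_apply, mem_monoReject.1 hx Y hY g, map_zero]

theorem Repn.isMonoRep_quotient_monoReject :
    (X.quotient X.monoReject monoReject_le_comap).IsMonoRep := by
  let π : RepHom X (X.quotient X.monoReject monoReject_le_comap) := quotientMk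
  refine isMonoRep_iff.2 fun i y hy => ?_
  choose x hx using fun a : Σ j : V, j ⟶ i => (X.monoReject a.1).mkQ_surjective (y a)
  obtain rfl : (fun a => π.app a.1 (x a)) = y := funext hx
  rw [← π.app_inMap] at hy
  have hmem : X.inMap i x ∈ X.monoReject i := (Submodule.Quotient.mk_eq_zero _).1 hy
  refine funext fun a => (Submodule.Quotient.mk_eq_zero _).2 (mem_monoReject.2 fun Y hY g => ?_)
  refine congrFun (isMonoRep_iff.1 hY i (fun a => g.app a.1 (x a)) ?_) a
  rw [← g.app_inMap, mem_monoReject.1 hmem Y hY g]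

theorem Repn.isLeftApproximation_quotientMk_monoReject :
    IsLeftApproximation IsMonoRep (quotientMk (X := X) (hN := monoReject_le_comap)) :=
  ⟨isMonoRep_quotient_monoReject, fun Y hY g =>
    g.exists_comp_quotientMk_eq fun _ _ hx => mem_monoReject.1 hx Y hY g⟩

end LeftApproximation

section RightApproximation

variable {W : V → Type} [∀ i, AddCommGroup (W i)] [∀ i, Module Λ (W i)]
  {e : ∀ i, (Y.M i × ArrowProd W i) →ₗ[Λ] W i}

theorem Repn.monoCoverSnd_inMap {i : V} (x : (b : Σ k : V, k ⟶ i) → (Y.monoCover e).M b.1)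
    (b : Σ k : V, k ⟶ i) :
    Y.monoCoverSnd e i ((Y.monoCover e).inMap i x) b = e b.1 (x b) := by
  classical
  have hcoord (c : Σ k : V, k ⟶ i) :
      Y.monoCoverSnd e i ((Y.monoCover e).h c.2 (x c)) = Pi.single c (e c.1 (x c)) :=
    (arrowProdEquiv Λ W i).apply_symm_apply _
  rw [inMap_apply, map_sum, Finset.sum_apply]
  simp only [hcoord]
  exact Fintype.sum_pi_single b fun b => e b.1 (x b)

theorem Repn.isMonoRep_monoCover (he : ∀ i, Function.Injective (e i)) :
    (Y.monoCover e).IsMonoRep := fun i x x' hx => funext fun b => he b.1 <| by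
  rw [← monoCoverSnd_inMap, ← monoCoverSnd_inMap, hx]

theorem Repn.IsMonoRep.exists_monoCoverSnd_inMap_eq [∀ i, Module.Injective Λ (W i)]
    (hX : X.IsMonoRep) {i : V} (g : X.M i →ₗ[Λ] Y.M i) (f : ∀ k, (k ⟶ i) → X.M k →ₗ[Λ] W k) :
    ∃ φ : X.M i →ₗ[Λ] (Y.monoCover e).M i, (Y.monoCoverFst e).app i ∘ₗ φ = g ∧
      ∀ x b, Y.monoCoverSnd e i (φ (X.inMap i x)) b = f b.1 b.2 (x b) := by
  choose ψ hψ using fun b : Σ k : V, k ⟶ i =>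
    (Module.Baer.of_injective (inferInstanceAs (Module.Injective Λ (W b.1)))).extension_property
      (X.inMap i) (hX i) (f b.1 b.2 ∘ₗ .proj b)
  refine ⟨g.prod ((arrowProdEquiv Λ W i).symm.toLinearMap ∘ₗ .pi ψ), rfl, fun x b => ?_⟩
  have hsnd := (arrowProdEquiv Λ W i).apply_symm_apply (LinearMap.pi ψ (X.inMap i x))
  exact (congrFun hsnd b).trans (LinearMap.congr_fun (hψ b) x)

theorem IsAcyclic.exists_monoCover_lift [∀ i, Module.Injective Λ (W i)] (hV : IsAcyclic V)
    (hX : X.IsMonoRep) (g : RepHom X Y) :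
    ∃ φ : RepHom X (Y.monoCover e), (Y.monoCoverFst e).comp φ = g := by
  obtain ⟨φ, hφ⟩ := exists_forall_of_wellFounded hV.wellFounded
    fun i (φ : ∀ k, Nonempty (k ⟶ i) → X.M k →ₗ[Λ] (Y.monoCover e).M k) =>
      hX.exists_monoCoverSnd_inMap_eq (g.app i) fun k a => e k ∘ₗ φ k ⟨a⟩
  choose hfst hsnd using hφ
  refine ⟨.ofInMap φ fun i x => Repn.monoCover_ext ?_ (funext fun b => ?_),
    RepHom.ext (funext hfst)⟩
  · have hg (k : V) (x : X.M k) : (Y.monoCoverFst e).app k (φ k x) = g.app k x :=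
      LinearMap.congr_fun (hfst k) x
    simp only [RepHom.app_inMap, hg]
  · exact (hsnd i x b).trans (Repn.monoCoverSnd_inMap (fun b => φ b.1 (x b)) b).symm

theorem exists_isRightApproximation (hΛ : HasFiniteInjectiveEmbeddings.{0, 0} Λ)
    (hV : IsAcyclic V) (hY : Y.FG) : ∃ (X : Repn Λ V) (g : RepHom X Y),
      X.FG ∧ IsRightApproximation Repn.IsMonoRep g := by
  obtain ⟨W, e, hW⟩ := exists_arrowProd_embedding hΛ hV hY
  choose hfin hinj he using hW
  exact ⟨Y.monoCover e, Y.monoCoverFst e, hY.monoCover, Repn.isMonoRep_monoCover he,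
    fun X hX => hV.exists_monoCover_lift hX⟩

end RightApproximation

end MonoRep

end QuivRep

open QuivRep in
theorem mono_functorially_finite_torsionFree_general
    (V : Type) [Quiver.{1} V] [Fintype V] [∀ i j : V, Fintype (i ⟶ j)] (hacyc : IsAcyclic V)
    (Λ : Type) [Ring Λ] (hΛ : HasFiniteInjectiveEmbeddings.{0, 0} Λ) :
    (∀ (X Y Z : Repn Λ V) (f : RepHom X Y) (g : RepHom Y Z), IsSES f g →
      X.IsMonoRep → Z.IsMonoRep → Y.IsMonoRep) ∧
    (∀ (X Y : Repn Λ V) (f : RepHom X Y),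
      (∀ i, Function.Injective (f.app i)) → Y.IsMonoRep → X.IsMonoRep) ∧
    (∀ Y : Repn Λ V, Y.FG → ∃ (X : Repn Λ V) (g : RepHom X Y),
      X.FG ∧ IsRightApproximation Repn.IsMonoRep g) ∧
    (∀ X : Repn Λ V, X.FG → ∃ (Y : Repn Λ V) (g : RepHom X Y),
      Y.FG ∧ IsLeftApproximation Repn.IsMonoRep g) :=
  ⟨fun _ _ _ _ _ h hX hZ => h.isMonoRep hX hZ, fun _ _ f hf hY => hY.of_injective f hf,
    fun _ hY => exists_isRightApproximation hΛ hacyc hY,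
    fun _ hX => ⟨_, _, hX.quotient, Repn.isLeftApproximation_quotientMk_monoReject⟩⟩

open QuivRep in
/-- For every finite acyclic quiver `Q` and every Artin algebra `Λ`, the
monomorphism category `mono(Q,Λ)` is a functorially finite torsion-free class of `mod ΛQ`:
it is closed under extensions, closed under submodules, contravariantly finite and
covariantly finite in `mod ΛQ = rep(Q, mod Λ)`. -/
theorem mono_functorially_finite_torsionFree
    (V : Type) [Quiver.{1} V] [Fintype V] [∀ i j : V, Fintype (i ⟶ j)]
    (hacyc : IsAcyclic V)
    (R : Type) [CommRing R] [IsArtinianRing R]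
    (Λ : Type) [Ring Λ] [Algebra R Λ] [Module.Finite R Λ] :
    -- closed under extensions
    (∀ (X Y Z : Repn Λ V), X.FG → Y.FG → Z.FG →
      ∀ (f : RepHom X Y) (g : RepHom Y Z), IsSES f g →
        X.IsMonoRep → Z.IsMonoRep → Y.IsMonoRep) ∧
    -- closed under submodules
    (∀ (X Y : Repn Λ V), X.FG → Y.FG → ∀ (f : RepHom X Y),
      (∀ i, Function.Injective (f.app i)) → Y.IsMonoRep → X.IsMonoRep) ∧
    -- contravariantly finite
    (∀ (Y : Repn Λ V), Y.FG → ∃ (X : Repn Λ V) (g : RepHom X Y),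
      X.FG ∧ X.IsMonoRep ∧
      ∀ (X' : Repn Λ V), X'.FG → X'.IsMonoRep → ∀ g' : RepHom X' Y,
        ∃ φ : RepHom X' X, g.comp φ = g') ∧
    -- covariantly finite
    (∀ (X : Repn Λ V), X.FG → ∃ (Y : Repn Λ V) (g : RepHom X Y),
      Y.FG ∧ Y.IsMonoRep ∧
      ∀ (Y' : Repn Λ V), Y'.FG → Y'.IsMonoRep → ∀ g' : RepHom X Y',
        ∃ φ : RepHom Y Y', φ.comp g = g') := by
  have hΛ : HasFiniteInjectiveEmbeddings.{0, 0} Λ :=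
    (HasFiniteInjectiveEmbeddings.of_isArtinianRing R).of_finite_algebra
  obtain ⟨hext, hsub, hright, hleft⟩ := mono_functorially_finite_torsionFree_general V hacyc Λ hΛ
  refine ⟨fun X Y Z _ _ _ => hext X Y Z, fun X Y _ _ => hsub X Y, fun Y hY => ?_, fun X hX => ?_⟩
  · obtain ⟨X, g, hX, hg⟩ := hright Y hY
    exact ⟨X, g, hX, hg.1, fun X' _ => hg.2 X'⟩
  · obtain ⟨Y, g, hY, hg⟩ := hleft X hX
    exact ⟨Y, g, hY, hg.1, fun Y' _ => hg.2 Y'⟩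
end

section
/- For every finite acyclic quiver Q and every Artin algebra Λ, the monomorphism category mono(Q,Λ) has almost split sequences. -/
namespace QuivRep

variable {Λ : Type} [Ring Λ] {V : Type} [Quiver.{1} V] [Fintype V] [∀ i j : V, Fintype (i ⟶ j)]

/-- An object of the monomorphism category: finitely generated and monomorphic. -/
def Repn.InMono (X : Repn Λ V) : Prop := X.FG ∧ X.IsMonoRep

def IsSplitEpi {Y Z : Repn Λ V} (g : RepHom Y Z) : Prop :=
  ∃ s : RepHom Z Y, g.comp s = RepHom.id Z

def IsSplitMono {X Y : Repn Λ V} (f : RepHom X Y) : Prop :=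
  ∃ r : RepHom Y X, r.comp f = RepHom.id X

/-- `Z` is Ext-projective in `mono(Q,Λ)`. -/
def ExtProjective (Z : Repn Λ V) : Prop :=
  ∀ (X Y : Repn Λ V), X.InMono → Y.InMono →
    ∀ (f : RepHom X Y) (g : RepHom Y Z), IsSES f g → IsSplitEpi g

/-- `X` is Ext-injective in `mono(Q,Λ)`. -/
def ExtInjective (X : Repn Λ V) : Prop :=
  ∀ (Y Z : Repn Λ V), Y.InMono → Z.InMono →
    ∀ (f : RepHom X Y) (g : RepHom Y Z), IsSES f g → IsSplitMono f

/-- An almost split (Auslander–Reiten) sequence in the subcategory `mono(Q,Λ)`,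
in the sense of Auslander–Smalø. -/
def IsAlmostSplit {X Y Z : Repn Λ V} (f : RepHom X Y) (g : RepHom Y Z) : Prop :=
  X.InMono ∧ Y.InMono ∧ Z.InMono ∧ IsSES f g ∧ ¬ IsSplitEpi g ∧
    X.Indec ∧ Z.Indec ∧
    -- g is right almost split in mono(Q,Λ)
    (∀ (W : Repn Λ V), W.InMono → ∀ u : RepHom W Z, ¬ IsSplitEpi u →
      ∃ v : RepHom W Y, g.comp v = u) ∧
    -- f is left almost split in mono(Q,Λ)
    (∀ (W : Repn Λ V), W.InMono → ∀ u : RepHom X W, ¬ IsSplitMono u →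
      ∃ v : RepHom Y W, v.comp f = u)

end QuivRep

/-!
Auslander's defect formula attaches to every finitely generated representation `Z` a translate `N`,
such that all maps from `Z` lift along a given short exact sequence if and only if all maps to `N`
extend along it. It is the kernel of `ν P₁ → ν P₀` for a presentation `P₁ → P₀ → Z → 0`, where the
Nakayama functor `ν` replaces the free representation at a vertex by the cofree one with
coefficients in `Hom_R(Λ, E)`, for a dualizing `R`-module `E`.

Let `Z` be indecomposable and monomorphic but not Ext-projective, and let `T → N` be a minimal right
approximation by monomorphic representations. By the defect formula some map to `N` fails to extend
along a nonsplit sequence ending in `Z`; pushing out along its lift to `T` gives a nonsplit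
extension of `Z` by `T`. The ring `End Z` is local by Fitting's lemma, and pulling back along an
endomorphism that represents a socle element of `End Z` modulo the liftable endomorphisms makes the
extension right almost split. Splitting summands off its kernel then leaves an almost split
sequence. Sequences with a given left-hand term are obtained in the opposite category.

Right approximations come from the minimal monomorphisms of Ringel and Schmidmeier, left
approximations from the fact that the monomorphism category is closed under subobjects.
-/

namespace AlmostSplit

open CategoryTheory Limits Opposite

universe v u

/-! ### Almost split sequences in abelian categories -/

section Fitting

theorem exists_pow_eq_pow_succ_mul (R : Type*) {A : Type*} [CommRing R] [IsArtinianRing R]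
    [Ring A] [Algebra R A] [Module.Finite R A] (a : A) :
    ∃ (n : ℕ) (b : A), Commute a b ∧ a ^ n = a ^ (n + 1) * b := by
  let a' : Algebra.adjoin R {a} := ⟨a, Algebra.self_mem_adjoin_singleton R a⟩
  have : IsArtinian R (Algebra.adjoin R {a}) :=
    inferInstanceAs (IsArtinian R (Subalgebra.toSubmodule (Algebra.adjoin R {a})))
  have : IsArtinianRing (Algebra.adjoin R {a}) := isArtinian_of_tower R this
  obtain ⟨n, b, hb⟩ := IsArtinian.exists_pow_succ_smul_dvd a' (1 : Algebra.adjoin R {a})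
  have hab : Commute a b := congrArg Subtype.val (mul_comm a' b)
  exact ⟨n, b, hab, by simpa [a'] using congrArg Subtype.val hb.symm⟩

theorem exists_fitting_idempotent (R : Type*) {A : Type*} [CommRing R] [IsArtinianRing R]
    [Ring A] [Algebra R A] [Module.Finite R A] (a : A) :
    ∃ (e b : A) (n : ℕ), IsIdempotentElem e ∧ Commute a b ∧ e = a * b ∧
      e * a ^ n = a ^ n ∧ a ^ n * e = a ^ n := by
  obtain ⟨n, b, hab, h⟩ := exists_pow_eq_pow_succ_mul R a
  have hpow (k : ℕ) : a ^ n = a ^ n * (a * b) ^ k := by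
    induction k with
    | zero => simp
    | succ k ih =>
      calc a ^ n = a ^ n * (a * b) ^ k := ih
        _ = a ^ (n + 1) * b * (a * b) ^ k := by rw [← h]
        _ = a ^ n * (a * b) ^ (k + 1) := by simp only [pow_succ, pow_succ' (a * b), mul_assoc]
  have hcomm : Commute (a ^ n) ((a * b) ^ (n + 1)) :=
    (((Commute.refl a).mul_right hab).pow_left n).pow_right (n + 1)
  refine ⟨(a * b) ^ (n + 1), b * (a * b) ^ n, n, ?_, ?_, ?_, ?_, ?_⟩
  · change (a * b) ^ (n + 1) * (a * b) ^ (n + 1) = (a * b) ^ (n + 1)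
    have hn : (a * b) ^ n * (a * b) ^ (n + 1) = (a * b) ^ n := by
      rw [hab.mul_pow, (hab.pow_pow n n).eq, mul_assoc, ← hpow]
    calc (a * b) ^ (n + 1) * (a * b) ^ (n + 1)
        = (a * b) * ((a * b) ^ n * (a * b) ^ (n + 1)) := by rw [pow_succ', mul_assoc]
      _ = (a * b) ^ (n + 1) := by rw [hn, pow_succ']
  · exact hab.mul_right (((Commute.refl a).mul_right hab).pow_right n)
  · rw [pow_succ', mul_assoc]
  · rw [← hcomm.eq, ← hpow]
  · exact (hpow _).symm

end Fitting

section ShortExact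

variable {𝒜 : Type u} [Category.{v} 𝒜] [Abelian 𝒜]

/-- Short exactness of a pair of composable morphisms, as an unbundled counterpart of
`ShortComplex.ShortExact`. -/
def IsShortExact {X Y Z : 𝒜} (f : X ⟶ Y) (g : Y ⟶ Z) : Prop :=
  ∃ w : f ≫ g = 0, (ShortComplex.mk f g w).ShortExact

namespace IsShortExact

variable {X Y Z W : 𝒜} {f : X ⟶ Y} {g : Y ⟶ Z}

theorem comp_eq_zero (h : IsShortExact f g) : f ≫ g = 0 := h.1

theorem mono (h : IsShortExact f g) : Mono f := h.2.mono_f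

theorem epi (h : IsShortExact f g) : Epi g := h.2.epi_g

theorem exists_lift (h : IsShortExact f g) (k : W ⟶ Y) (hk : k ≫ g = 0) : ∃ l, l ≫ f = k :=
  have := h.mono
  ⟨h.2.exact.lift k hk, h.2.exact.lift_f k hk⟩

theorem exists_desc (h : IsShortExact f g) (k : Y ⟶ W) (hk : f ≫ k = 0) : ∃ l, g ≫ l = k :=
  have := h.epi
  ⟨h.2.exact.desc k hk, h.2.exact.g_desc k hk⟩

theorem op (h : IsShortExact f g) : IsShortExact g.op f.op :=
  ⟨by rw [← op_comp, h.comp_eq_zero, op_zero], h.2.op⟩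

theorem unop {X Y Z : 𝒜ᵒᵖ} {f : X ⟶ Y} {g : Y ⟶ Z} (h : IsShortExact f g) :
    IsShortExact g.unop f.unop :=
  ⟨by rw [← unop_comp, h.comp_eq_zero, unop_zero], h.2.unop⟩

theorem isSplitMono_iff (h : IsShortExact f g) : IsSplitMono f ↔ IsSplitEpi g := by
  have := h.mono
  have := h.epi
  constructor
  · intro _
    obtain ⟨s, hs⟩ := h.exists_desc (𝟙 Y - retraction f ≫ f) (by simp)
    refine IsSplitEpi.mk' ⟨s, ?_⟩
    simp [← cancel_epi g, reassoc_of% hs, h.comp_eq_zero]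
  · intro _
    obtain ⟨r, hr⟩ := h.exists_lift (𝟙 Y - g ≫ section_ g) (by simp)
    refine IsSplitMono.mk' ⟨r, ?_⟩
    simp [← cancel_mono f, hr, reassoc_of% h.comp_eq_zero]

theorem exists_isPullback (h : IsShortExact f g) (c : W ⟶ Z) :
    ∃ (Y' : 𝒜) (f' : X ⟶ Y') (g' : Y' ⟶ W) (q : Y' ⟶ Y),
      IsShortExact f' g' ∧ f' ≫ q = f ∧ IsPullback q g' g c := by
  have := h.mono
  have := h.epi
  obtain ⟨f', hfst, hsnd⟩ : ∃ f' : X ⟶ pullback g c,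
      f' ≫ pullback.fst g c = f ∧ f' ≫ pullback.snd g c = 0 :=
    ⟨pullback.lift f 0 (by simp [h.comp_eq_zero]), pullback.lift_fst .., pullback.lift_snd ..⟩
  refine ⟨_, f', _, _, ⟨hsnd, ?_⟩, hfst, IsPullback.of_hasPullback g c⟩
  have : Mono f' := mono_of_mono_fac hfst
  refine .mk' (ShortComplex.exact_of_f_is_kernel _ (KernelFork.IsLimit.ofι' _ _ fun k hk => ?_))
    this inferInstance
  have hl : (k ≫ pullback.fst g c) ≫ g = 0 := by
    rw [Category.assoc, pullback.condition, reassoc_of% hk, zero_comp]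
  refine ⟨(h.exists_lift _ hl).choose, pullback.hom_ext ?_ ?_⟩
  · rw [Category.assoc, hfst, (h.exists_lift _ hl).choose_spec]
  · rw [Category.assoc, hsnd, comp_zero, hk]

theorem exists_isPushout (h : IsShortExact f g) (c : X ⟶ W) :
    ∃ (Y' : 𝒜) (f' : W ⟶ Y') (g' : Y' ⟶ Z) (q : Y ⟶ Y'),
      IsShortExact f' g' ∧ q ≫ g' = g ∧ IsPushout c f f' q := by
  obtain ⟨Y', f', g', q, h', hq, hpb⟩ := h.op.exists_isPullback c.op
  exact ⟨_, g'.unop, f'.unop, q.unop, h'.unop, congrArg Quiver.Hom.unop hq, hpb.unop⟩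

end IsShortExact

theorem isSplitEpi_iff_exists_comp_eq {𝒜 : Type*} [Category* 𝒜] {P X Y Z : 𝒜} {fst : P ⟶ X}
    {snd : P ⟶ Y} {f : X ⟶ Z} {g : Y ⟶ Z} (h : IsPullback fst snd f g) :
    IsSplitEpi snd ↔ ∃ k, k ≫ f = g := by
  constructor
  · intro _
    exact ⟨section_ snd ≫ fst, by simp [h.w]⟩
  · rintro ⟨k, hk⟩
    exact IsSplitEpi.mk' ⟨h.lift k (𝟙 Y) (by simp [hk]), by simp⟩

theorem isSplitMono_iff_exists_comp_eq {𝒜 : Type*} [Category* 𝒜] {Z X Y P : 𝒜} {f : Z ⟶ X}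
    {g : Z ⟶ Y} {inl : X ⟶ P} {inr : Y ⟶ P} (h : IsPushout f g inl inr) :
    IsSplitMono inl ↔ ∃ k, g ≫ k = f := by
  constructor
  · intro _
    exact ⟨inr ≫ retraction inl, by rw [← h.w_assoc]; simp⟩
  · rintro ⟨k, hk⟩
    exact IsSplitMono.mk' ⟨h.desc (𝟙 X) k (by simp [hk]), by simp⟩

end ShortExact

section Indecomposable

theorem comp_end_pow {𝒜 : Type*} [Category* 𝒜] {X Y : 𝒜} {f : X ⟶ Y} {a : End X} {b : End Y}
    (h : f ≫ b = a ≫ f) (n : ℕ) : f ≫ (b ^ n : End Y) = (a ^ n : End X) ≫ f := by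
  induction n with
  | zero => simp [End.one_def]
  | succ n ih => simp only [pow_succ, End.mul_def, Category.assoc, ← ih, reassoc_of% h]

theorem end_pow_comp {𝒜 : Type*} [Category* 𝒜] {X Y : 𝒜} {f : X ⟶ Y} {a : End X}
    (h : a ≫ f = f) (n : ℕ) : (a ^ n : End X) ≫ f = f := by
  have := comp_end_pow (f := f) (a := a) (b := 1) (by rw [h, End.one_def, Category.comp_id]) n
  rw [← this, one_pow, End.one_def, Category.comp_id]

variable {𝒜 : Type u} [Category.{v} 𝒜] [Abelian 𝒜]
  (R : Type*) [CommRing R] [IsArtinianRing R] [Linear R 𝒜]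

theorem exists_fitting_idempotent_end {X : 𝒜} [Module.Finite R (X ⟶ X)] (a : End X) :
    ∃ (e : X ⟶ X) (n : ℕ), e ≫ e = e ∧ (e = 𝟙 X → IsIso a) ∧
      (a ^ n : End X) ≫ e = (a ^ n : End X) ∧ e ≫ (a ^ n : End X) = (a ^ n : End X) := by
  have : Module.Finite R (End X) := ‹_›
  obtain ⟨e, b, n, he, hab, heb, hea, hae⟩ := exists_fitting_idempotent R a
  refine ⟨e, n, he, fun h => ⟨b, ?_, ?_⟩, hea, hae⟩
  · rw [← End.mul_def, ← hab.eq, ← heb, h]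
  · rw [← End.mul_def, ← heb, h]

theorem length_end_lt_of_retract {X Y : 𝒜} [Module.Finite R (X ⟶ X)] (r : Retract Y X)
    (h : r.r ≫ r.i ≠ 𝟙 X) : Module.length R (Y ⟶ Y) < Module.length R (X ⟶ X) := by
  let φ : (Y ⟶ Y) →ₗ[R] (X ⟶ X) := Linear.rightComp R X r.i ∘ₗ Linear.leftComp R Y r.r
  have hφ (f : Y ⟶ Y) : φ f = (r.r ≫ f) ≫ r.i := rfl
  have hinj : Function.Injective φ := fun f g hfg => by
    simpa [hφ] using r.i ≫= hfg =≫ r.r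
  rw [(LinearEquiv.ofInjective φ hinj).length_eq]
  refine Submodule.length_lt fun htop => h ?_
  obtain ⟨f, hf⟩ : 𝟙 X ∈ LinearMap.range φ := htop ▸ Submodule.mem_top
  calc r.r ≫ r.i = r.r ≫ r.i ≫ φ f := by rw [hf, Category.comp_id]
    _ = 𝟙 X := by simp [hφ, ← hf]

/-- Indecomposability of an object, phrased via idempotent endomorphisms. -/
def IsIndec (X : 𝒜) : Prop :=
  ¬ IsZero X ∧ ∀ e : X ⟶ X, e ≫ e = e → e = 𝟙 X ∨ e = 0

namespace IsIndec

variable {X : 𝒜}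

theorem isIso_or_pow_eq_zero (hX : IsIndec X) [Module.Finite R (X ⟶ X)] (a : End X) :
    IsIso a ∨ ∃ n : ℕ, a ^ n = 0 := by
  obtain ⟨e, n, he, hiso, hae, -⟩ := exists_fitting_idempotent_end R a
  rcases hX.2 e he with h1 | h0
  · exact .inl (hiso h1)
  · exact .inr ⟨n, by rw [← hae, h0, comp_zero]⟩

theorem isIso_of_isIso_comp (hX : IsIndec X) (a b : X ⟶ X) [IsIso (a ≫ b)] : IsIso b := by
  have hsplit : inv (a ≫ b) ≫ a ≫ b = 𝟙 X := by simp
  rcases hX.2 (b ≫ inv (a ≫ b) ≫ a) (by simp [reassoc_of% hsplit]) with h1 | h0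
  · exact ⟨inv (a ≫ b) ≫ a, h1, by simp⟩
  · refine absurd ((IsZero.iff_id_eq_zero X).2 ?_) hX.1
    calc 𝟙 X = (inv (a ≫ b) ≫ a) ≫ (b ≫ inv (a ≫ b) ≫ a) ≫ b := by simp
      _ = 0 := by rw [h0, zero_comp, comp_zero]

/-- For `I` the endomorphisms factoring through an epimorphism onto `X`, the conclusion says that
`e` represents a socle element of `End X ⧸ I`. -/
theorem exists_notMem_comp_mem (hX : IsIndec X) [Module.Finite R (X ⟶ X)] (I : Set (X ⟶ X))
    (hzero : 0 ∈ I) (hone : 𝟙 X ∉ I) : ∃ e ∉ I, ∀ a : X ⟶ X, ¬ IsIso a → a ≫ e ∈ I := by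
  obtain ⟨e, he, hmin⟩ := WellFounded.has_min
    (InvImage.wf (fun e : X ⟶ X => LinearMap.range (Linear.rightComp R X e)) wellFounded_lt)
    Iᶜ ⟨_, hone⟩
  refine ⟨e, he, fun a ha => by_contra fun hae => ?_⟩
  have hle : LinearMap.range (Linear.rightComp R X (a ≫ e)) ≤
      LinearMap.range (Linear.rightComp R X e) := by
    rintro _ ⟨b, rfl⟩
    exact ⟨b ≫ a, by simp⟩
  obtain ⟨b, hb⟩ : e ∈ LinearMap.range (Linear.rightComp R X (a ≫ e)) :=
    eq_of_le_of_not_lt hle (hmin _ hae) ▸ ⟨𝟙 X, by simp⟩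
  have hbae : (b ≫ a) ≫ e = e := by simpa using hb
  rcases hX.isIso_or_pow_eq_zero R (b ≫ a) with _ | ⟨n, hn⟩
  · exact ha (hX.isIso_of_isIso_comp b a)
  · rw [← end_pow_comp hbae n, hn] at he
    exact he (by simpa using hzero)

end IsIndec

/-- A right `P`-approximation of `N`. -/
def IsRightApproximation (P : ObjectProperty 𝒜) {T N : 𝒜} (φ : T ⟶ N) : Prop :=
  P T ∧ ∀ W, P W → ∀ u : W ⟶ N, ∃ v, v ≫ φ = u

/-- A left `P`-approximation of `M`. -/
def IsLeftApproximation (P : ObjectProperty 𝒜) {M S : 𝒜} (φ : M ⟶ S) : Prop :=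
  P S ∧ ∀ W, P W → ∀ u : M ⟶ W, ∃ v, φ ≫ v = u

theorem IsRightApproximation.exists_minimal {P : ObjectProperty 𝒜} [P.IsStableUnderRetracts]
    (hfin : ∀ X, P X → Module.Finite R (X ⟶ X)) {T N : 𝒜} {φ : T ⟶ N}
    (hφ : IsRightApproximation P φ) :
    ∃ (T' : 𝒜) (φ' : T' ⟶ N), IsRightApproximation P φ' ∧ ∀ a, a ≫ φ' = φ' → IsIso a := by
  obtain ⟨T, ⟨φ, hφ⟩, hmin⟩ := WellFounded.has_min
    (InvImage.wf (fun T : 𝒜 => Module.length R (T ⟶ T)) wellFounded_lt)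
    {T | ∃ φ : T ⟶ N, IsRightApproximation P φ} ⟨T, φ, hφ⟩
  have := hfin T hφ.1
  refine ⟨T, φ, hφ, fun a ha => ?_⟩
  obtain ⟨e, n, he, hiso, -, hea⟩ := exists_fitting_idempotent_end R (a : End T)
  obtain ⟨T', i, p, hip, hpi⟩ := IsIdempotentComplete.idempotents_split T e he
  have heφ : p ≫ i ≫ φ = φ := by
    rw [reassoc_of% hpi, ← end_pow_comp ha n, reassoc_of% hea]
  have hT' : IsRightApproximation P (i ≫ φ) :=
    ⟨P.prop_of_retract ⟨i, p, hip⟩ hφ.1, fun W hW u =>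
      let ⟨v, hv⟩ := hφ.2 W hW u
      ⟨v ≫ p, by rw [Category.assoc, heφ, hv]⟩⟩
  by_contra hna
  exact hmin T' ⟨_, hT'⟩
    (length_end_lt_of_retract R ⟨i, p, hip⟩ fun h => hna (hiso (hpi ▸ h)))

theorem exists_isLeftApproximation (P : ObjectProperty 𝒜) [P.IsClosedUnderSubobjects]
    [P.IsClosedUnderExtensions] [P.Nonempty] (M : 𝒜) [IsArtinianObject M] :
    ∃ (S : 𝒜) (φ : M ⟶ S), IsLeftApproximation P φ := by
  obtain ⟨_, ⟨S, hS, p, rfl⟩, hmin⟩ := WellFounded.has_min (wellFounded_lt (α := Subobject M))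
    {K | ∃ S, P S ∧ ∃ p : M ⟶ S, kernelSubobject p = K} ⟨_, _, P.prop_arbitrary, 0, rfl⟩
  refine ⟨Abelian.coimage p, Abelian.coimage.π p, P.prop_of_mono (Abelian.factorThruCoimage p) hS,
    fun W hW u => ⟨cokernel.desc _ u ?_, cokernel.π_desc _ u _⟩⟩
  let l : M ⟶ S ⊞ W := biprod.lift p u
  have hle : kernelSubobject l ≤ kernelSubobject p :=
    (kernelSubobject_comp_le l biprod.fst).trans_eq (by rw [biprod.lift_fst])
  have hge : kernelSubobject p ≤ kernelSubobject l :=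
    (hle.eq_of_not_lt (hmin _ ⟨_, P.prop_biprod hS hW, l, rfl⟩)).ge
  rw [← kernelSubobject_arrow', ← Subobject.ofLE_arrow hge, Category.assoc, Category.assoc,
    ← biprod.lift_snd p u, kernelSubobject_arrow_comp_assoc, zero_comp, comp_zero, comp_zero]

end Indecomposable

section AlmostSplitSequence

variable {𝒜 : Type u} [Category.{v} 𝒜] [Abelian 𝒜] {P : ObjectProperty 𝒜}

/-- The relation linking a module `M` with its translate `N = DTr M`: by Auslander's defect formula
the contravariant defect of a short exact sequence at `M` vanishes if and only if its covariant
defect at `N` does. -/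
def IsDefectPair (M N : 𝒜) : Prop :=
  ∀ ⦃X Y Z : 𝒜⦄ (f : X ⟶ Y) (g : Y ⟶ Z), IsShortExact f g →
    ((∀ h : M ⟶ Z, ∃ k, k ≫ g = h) ↔ ∀ h : X ⟶ N, ∃ k, f ≫ k = h)

/-- `g` is right almost split in the subcategory `P`. -/
def IsRightAlmostSplit (P : ObjectProperty 𝒜) {Y Z : 𝒜} (g : Y ⟶ Z) : Prop :=
  ¬ IsSplitEpi g ∧ ∀ W, P W → ∀ u : W ⟶ Z, ¬ IsSplitEpi u → ∃ v, v ≫ g = u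

/-- `f` is left almost split in the subcategory `P`. -/
def IsLeftAlmostSplit (P : ObjectProperty 𝒜) {X Y : 𝒜} (f : X ⟶ Y) : Prop :=
  ¬ IsSplitMono f ∧ ∀ W, P W → ∀ u : X ⟶ W, ¬ IsSplitMono u → ∃ v, f ≫ v = u

/-- `f` and `g` form an almost split sequence in the subcategory `P`. -/
structure IsAlmostSplitSequence (P : ObjectProperty 𝒜) {X Y Z : 𝒜} (f : X ⟶ Y) (g : Y ⟶ Z) :
    Prop where
  prop_left : P X
  prop_middle : P Y
  prop_right : P Z
  isShortExact : IsShortExact f g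
  isIndec_left : IsIndec X
  isIndec_right : IsIndec Z
  isRightAlmostSplit : IsRightAlmostSplit P g
  isLeftAlmostSplit : IsLeftAlmostSplit P f

theorem IsShortExact.prop_middle [P.IsClosedUnderExtensions] {X Y Z : 𝒜} {f : X ⟶ Y} {g : Y ⟶ Z}
    (h : IsShortExact f g) (hX : P X) (hZ : P Z) : P Y :=
  P.prop_X₂_of_shortExact h.2 hX hZ

theorem IsRightApproximation.exists_not_isSplitEpi {T N Z X Y : 𝒜} {φ : T ⟶ N}
    (hφ : IsRightApproximation P φ) (hZN : IsDefectPair Z N) (hX : P X) {f : X ⟶ Y} {g : Y ⟶ Z}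
    (hfg : IsShortExact f g) (hg : ¬ IsSplitEpi g) :
    ∃ (Y' : 𝒜) (f' : T ⟶ Y') (g' : Y' ⟶ Z), IsShortExact f' g' ∧ ¬ IsSplitEpi g' := by
  have hid : ¬ ∀ h : Z ⟶ Z, ∃ k, k ≫ g = h := fun hall =>
    hg (IsSplitEpi.mk' ⟨(hall (𝟙 Z)).choose, (hall (𝟙 Z)).choose_spec⟩)
  rw [hZN f g hfg] at hid
  push Not at hid
  obtain ⟨h, hh⟩ := hid
  obtain ⟨u, rfl⟩ := hφ.2 X hX h
  obtain ⟨Y', f', g', q, hfg', -, hpo⟩ := hfg.exists_isPushout u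
  refine ⟨Y', f', g', hfg', fun hg' => ?_⟩
  obtain ⟨k, hk⟩ := (isSplitMono_iff_exists_comp_eq hpo).1 (hfg'.isSplitMono_iff.2 hg')
  exact hh (k ≫ φ) (by rw [← Category.assoc, hk])

/-- The sequence is pulled back along a socle element of `End Z` modulo the endomorphisms factoring
through `g`. -/
theorem IsShortExact.exists_forall_not_isIso_exists_comp_eq (R : Type*) [CommRing R]
    [IsArtinianRing R] [Linear R 𝒜] {X Y Z : 𝒜} {f : X ⟶ Y} {g : Y ⟶ Z} (hfg : IsShortExact f g)
    (hg : ¬ IsSplitEpi g) (hZ : IsIndec Z) [Module.Finite R (Z ⟶ Z)] :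
    ∃ (Y' : 𝒜) (f' : X ⟶ Y') (g' : Y' ⟶ Z), IsShortExact f' g' ∧ ¬ IsSplitEpi g' ∧
      ∀ a : Z ⟶ Z, ¬ IsIso a → ∃ v, v ≫ g' = a := by
  obtain ⟨e, he, hsocle⟩ := hZ.exists_notMem_comp_mem R {a | ∃ k, k ≫ g = a} ⟨0, zero_comp⟩
    fun ⟨k, hk⟩ => hg (IsSplitEpi.mk' ⟨k, hk⟩)
  obtain ⟨Y', f', g', q, hfg', -, hpb⟩ := hfg.exists_isPullback e
  refine ⟨Y', f', g', hfg', fun hg' => he ((isSplitEpi_iff_exists_comp_eq hpb).1 hg'),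
    fun a ha => ?_⟩
  obtain ⟨k, hk⟩ := hsocle a ha
  exact ⟨hpb.lift k a hk, hpb.lift_snd ..⟩

/-- Pulling back along `u : W ⟶ Z`, every morphism `Z ⟶ W` lifts, so the approximation `φ` extends
over the pulled back sequence; minimality of `φ` then splits it. -/
theorem IsRightApproximation.isRightAlmostSplit [P.IsClosedUnderExtensions] {T N Z Y : 𝒜}
    {φ : T ⟶ N} (hφ : IsRightApproximation P φ) (hmin : ∀ a, a ≫ φ = φ → IsIso a)
    (hZN : IsDefectPair Z N) {f : T ⟶ Y} {g : Y ⟶ Z} (hfg : IsShortExact f g)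
    (hg : ¬ IsSplitEpi g) (hrad : ∀ a : Z ⟶ Z, ¬ IsIso a → ∃ v, v ≫ g = a) :
    IsRightAlmostSplit P g := by
  refine ⟨hg, fun W hW u hu => ?_⟩
  obtain ⟨Y', f', g', q, hfg', -, hpb⟩ := hfg.exists_isPullback u
  have hlift (h : Z ⟶ W) : ∃ k, k ≫ g' = h := by
    have hnot : ¬ IsIso (h ≫ u) := fun _ =>
      hu (IsSplitEpi.mk' ⟨inv (h ≫ u) ≫ h, by simp⟩)
    obtain ⟨v, hv⟩ := hrad _ hnot
    exact ⟨hpb.lift v h hv, hpb.lift_snd ..⟩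
  obtain ⟨ψ, hψ⟩ := (hZN f' g' hfg').1 hlift φ
  obtain ⟨w, rfl⟩ := hφ.2 Y' (hfg'.prop_middle hφ.1 hW) ψ
  have : IsIso (f' ≫ w) := hmin _ (by rw [Category.assoc, hψ])
  have hf' : IsSplitMono f' :=
    IsSplitMono.mk' ⟨w ≫ inv (f' ≫ w), by rw [← Category.assoc, IsIso.hom_inv_id]⟩
  exact (isSplitEpi_iff_exists_comp_eq hpb).1 (hfg'.isSplitMono_iff.1 hf')

/-- If both pushouts along the projections of `X` to the summands cut out by `e` split, then so
does the sequence. -/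
theorem IsShortExact.exists_retract_not_isSplitEpi {X Y Z : 𝒜} {f : X ⟶ Y} {g : Y ⟶ Z}
    (hfg : IsShortExact f g) (hg : ¬ IsSplitEpi g) {e : X ⟶ X} (he : e ≫ e = e) (h1 : e ≠ 𝟙 X)
    (h0 : e ≠ 0) :
    ∃ (X' Y' : 𝒜) (r : Retract X' X) (f' : X' ⟶ Y') (g' : Y' ⟶ Z) (q : Y ⟶ Y'),
      r.r ≫ r.i ≠ 𝟙 X ∧ IsShortExact f' g' ∧ ¬ IsSplitEpi g' ∧ q ≫ g' = g := by
  have key (e : X ⟶ X) (he : e ≫ e = e) (h1 : e ≠ 𝟙 X) (hne : ¬ ∃ k, f ≫ k = e) :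
      ∃ (X' Y' : 𝒜) (r : Retract X' X) (f' : X' ⟶ Y') (g' : Y' ⟶ Z) (q : Y ⟶ Y'),
        r.r ≫ r.i ≠ 𝟙 X ∧ IsShortExact f' g' ∧ ¬ IsSplitEpi g' ∧ q ≫ g' = g := by
    obtain ⟨X', i, p, hip, rfl⟩ := IsIdempotentComplete.idempotents_split X e he
    obtain ⟨Y', f', g', q, hfg', hq, hpo⟩ := hfg.exists_isPushout p
    refine ⟨X', Y', ⟨i, p, hip⟩, f', g', q, h1, hfg', fun hg' => hne ?_, hq⟩
    obtain ⟨k, hk⟩ := (isSplitMono_iff_exists_comp_eq hpo).1 (hfg'.isSplitMono_iff.2 hg')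
    exact ⟨k ≫ i, by rw [reassoc_of% hk]⟩
  by_cases hk : ∃ k, f ≫ k = e
  · refine key (𝟙 X - e) (Idempotents.idem_of_id_sub_idem e he) (by simpa using h0) ?_
    rintro ⟨l, hl⟩
    obtain ⟨k, hk⟩ := hk
    exact hg (hfg.isSplitMono_iff.1 (IsSplitMono.mk' ⟨k + l, by simp [hk, hl]⟩))
  · exact key e he h1 hk

theorem IsRightAlmostSplit.of_comp {𝒜 : Type*} [Category* 𝒜] {P : ObjectProperty 𝒜} {Y Y' Z : 𝒜}
    {g : Y ⟶ Z} {g' : Y' ⟶ Z} (hg : IsRightAlmostSplit P g) {q : Y ⟶ Y'} (hq : q ≫ g' = g)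
    (hg' : ¬ IsSplitEpi g') : IsRightAlmostSplit P g' :=
  ⟨hg', fun W hW u hu =>
    let ⟨v, hv⟩ := hg.2 W hW u hu
    ⟨v ≫ q, by rw [Category.assoc, hq, hv]⟩⟩

theorem IsRightAlmostSplit.exists_isIndec (R : Type*) [CommRing R] [IsArtinianRing R] [Linear R 𝒜]
    [P.IsStableUnderRetracts] (hfin : ∀ X, P X → Module.Finite R (X ⟶ X)) {X Y Z : 𝒜} {f : X ⟶ Y}
    {g : Y ⟶ Z} (hX : P X) (hfg : IsShortExact f g) (hg : IsRightAlmostSplit P g) :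
    ∃ (X' Y' : 𝒜) (f' : X' ⟶ Y') (g' : Y' ⟶ Z),
      P X' ∧ IsShortExact f' g' ∧ IsRightAlmostSplit P g' ∧ IsIndec X' := by
  obtain ⟨X, ⟨hX, Y, f, g, hfg, hg⟩, hmin⟩ := WellFounded.has_min
    (InvImage.wf (fun X : 𝒜 => Module.length R (X ⟶ X)) wellFounded_lt)
    {X | P X ∧ ∃ (Y : 𝒜) (f : X ⟶ Y) (g : Y ⟶ Z), IsShortExact f g ∧ IsRightAlmostSplit P g}
    ⟨X, hX, Y, f, g, hfg, hg⟩
  have := hfin X hX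
  refine ⟨X, Y, f, g, hX, hfg, hg, fun hzero => hg.1 ?_, fun e he => ?_⟩
  · exact hfg.isSplitMono_iff.1 (IsSplitMono.mk' ⟨0, hzero.eq_of_src _ _⟩)
  · by_contra! hne
    obtain ⟨X', Y', r, f', g', q, hr, hfg', hg', hq⟩ :=
      hfg.exists_retract_not_isSplitEpi hg.1 he hne.1 hne.2
    exact hmin X' ⟨P.prop_of_retract r hX, Y', f', g', hfg', hg.of_comp hq hg'⟩
      (length_end_lt_of_retract R r hr)

theorem IsRightAlmostSplit.isLeftAlmostSplit (R : Type*) [CommRing R] [IsArtinianRing R]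
    [Linear R 𝒜] [P.IsClosedUnderExtensions] {X Y Z : 𝒜} {f : X ⟶ Y} {g : Y ⟶ Z} (hZ : P Z)
    [Module.Finite R (X ⟶ X)] (hX : IsIndec X) (hfg : IsShortExact f g)
    (hg : IsRightAlmostSplit P g) : IsLeftAlmostSplit P f := by
  have := hfg.mono
  refine ⟨fun hf => hg.1 (hfg.isSplitMono_iff.1 hf), fun W hW u hu => ?_⟩
  obtain ⟨Y', f', g', q, hfg', hq, hpo⟩ := hfg.exists_isPushout u
  rw [← isSplitMono_iff_exists_comp_eq hpo, hfg'.isSplitMono_iff]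
  by_contra hg'
  obtain ⟨t, ht⟩ := hg.2 Y' (hfg'.prop_middle hW hZ) g' hg'
  obtain ⟨l, hl⟩ := hfg.exists_lift (f' ≫ t) (by rw [Category.assoc, ht, hfg'.comp_eq_zero])
  have hcomm : f ≫ q ≫ t = (u ≫ l) ≫ f := by rw [← hpo.w_assoc, Category.assoc, hl]
  rcases hX.isIso_or_pow_eq_zero R (u ≫ l) with _ | ⟨n, hn⟩
  · exact hu (IsSplitMono.mk' ⟨l ≫ inv (u ≫ l), by rw [← Category.assoc, IsIso.hom_inv_id]⟩)
  · let b : End Y := q ≫ t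
    obtain ⟨s, hs⟩ := hfg.exists_desc (b ^ n : End Y)
      (by rw [comp_end_pow hcomm, hn]; exact zero_comp)
    have := hfg.epi
    refine hg.1 (IsSplitEpi.mk' ⟨s, ?_⟩)
    rw [← cancel_epi g, reassoc_of% hs, end_pow_comp (by rw [Category.assoc, ht, hq]),
      Category.comp_id]

theorem exists_isAlmostSplitSequence_right (R : Type*) [CommRing R] [IsArtinianRing R]
    [Linear R 𝒜] [P.IsClosedUnderExtensions] [P.IsStableUnderRetracts]
    (hfin : ∀ X, P X → Module.Finite R (X ⟶ X)) {X Y Z N T : 𝒜} (hX : P X) (hZ : P Z)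
    (hZindec : IsIndec Z) (hZN : IsDefectPair Z N) {φ : T ⟶ N} (hφ : IsRightApproximation P φ)
    {f : X ⟶ Y} {g : Y ⟶ Z} (hfg : IsShortExact f g) (hg : ¬ IsSplitEpi g) :
    ∃ (X' Y' : 𝒜) (f' : X' ⟶ Y') (g' : Y' ⟶ Z), IsAlmostSplitSequence P f' g' := by
  have := hfin Z hZ
  obtain ⟨T, φ, hφ, hmin⟩ := hφ.exists_minimal R hfin
  obtain ⟨Y₁, f₁, g₁, hfg₁, hg₁⟩ := hφ.exists_not_isSplitEpi hZN hX hfg hg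
  obtain ⟨Y₂, f₂, g₂, hfg₂, hg₂, hrad⟩ :=
    hfg₁.exists_forall_not_isIso_exists_comp_eq R hg₁ hZindec
  have hras := hφ.isRightAlmostSplit hmin hZN hfg₂ hg₂ hrad
  obtain ⟨X', Y', f', g', hX', hfg', hg', hindec⟩ := hras.exists_isIndec R hfin hφ.1 hfg₂
  have := hfin X' hX'
  exact ⟨X', Y', f', g', hX', hfg'.prop_middle hX' hZ, hZ, hfg', hindec, hZindec, hg',
    hg'.isLeftAlmostSplit R hZ hindec hfg'⟩

end AlmostSplitSequence

section Opposite

instance linearOp (R : Type*) [Semiring R] {𝒜 : Type u} [Category.{v} 𝒜] [Preadditive 𝒜]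
    [Linear R 𝒜] : Linear R 𝒜ᵒᵖ where
  homModule _ _ :=
    { smul r f := (r • f.unop).op
      one_smul f := Quiver.Hom.unop_inj (one_smul R f.unop)
      mul_smul r s f := Quiver.Hom.unop_inj (mul_smul r s f.unop)
      smul_zero r := Quiver.Hom.unop_inj (smul_zero r)
      smul_add r f g := Quiver.Hom.unop_inj (smul_add r f.unop g.unop)
      add_smul r s f := Quiver.Hom.unop_inj (add_smul r s f.unop)
      zero_smul f := Quiver.Hom.unop_inj (zero_smul R f.unop) }
  smul_comp _ _ _ r f g := Quiver.Hom.unop_inj (Linear.comp_smul _ _ _ g.unop r f.unop)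
  comp_smul _ _ _ f r g := Quiver.Hom.unop_inj (Linear.smul_comp _ _ _ r g.unop f.unop)

instance (R : Type*) [Semiring R] {𝒜 : Type u} [Category.{v} 𝒜] [Preadditive 𝒜]
    [Linear R 𝒜] {X Y : 𝒜ᵒᵖ} [Module.Finite R (unop Y ⟶ unop X)] :
    Module.Finite R (X ⟶ Y) :=
  Module.Finite.of_surjective
    { toFun f := f.op, map_add' _ _ := rfl, map_smul' _ _ := rfl :
      (unop Y ⟶ unop X) →ₗ[R] (X ⟶ Y) } fun f => ⟨f.unop, rfl⟩

section Category

variable {𝒜 : Type*} [Category* 𝒜] {P : ObjectProperty 𝒜}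

theorem isSplitEpi_unop {X Y : 𝒜ᵒᵖ} (f : X ⟶ Y) [IsSplitMono f] : IsSplitEpi f.unop :=
  IsSplitEpi.mk' ⟨(retraction f).unop, by rw [← unop_comp, IsSplitMono.id, unop_id]⟩

theorem isSplitMono_unop {X Y : 𝒜ᵒᵖ} (f : X ⟶ Y) [IsSplitEpi f] : IsSplitMono f.unop :=
  IsSplitMono.mk' ⟨(section_ f).unop, by rw [← unop_comp, IsSplitEpi.id, unop_id]⟩

instance [P.IsStableUnderRetracts] : P.op.IsStableUnderRetracts where
  of_retract r hY := P.prop_of_retract ⟨r.r.unop, r.i.unop, congrArg Quiver.Hom.unop r.retract⟩ hY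

theorem IsLeftApproximation.op {M S : 𝒜} {φ : M ⟶ S} (h : IsLeftApproximation P φ) :
    IsRightApproximation P.op φ.op :=
  ⟨h.1, fun _ hW u =>
    let ⟨v, hv⟩ := h.2 _ hW u.unop
    ⟨v.op, congrArg Quiver.Hom.op hv⟩⟩

theorem IsRightAlmostSplit.unop {Y Z : 𝒜ᵒᵖ} {g : Y ⟶ Z} (h : IsRightAlmostSplit P.op g) :
    IsLeftAlmostSplit P g.unop :=
  ⟨fun _ => h.1 (inferInstanceAs (IsSplitEpi g.unop.op)), fun _ hW u hu =>
    let ⟨v, hv⟩ := h.2 _ hW u.op fun _ => hu (isSplitMono_unop u.op)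
    ⟨v.unop, congrArg Quiver.Hom.unop hv⟩⟩

theorem IsLeftAlmostSplit.unop {X Y : 𝒜ᵒᵖ} {f : X ⟶ Y} (h : IsLeftAlmostSplit P.op f) :
    IsRightAlmostSplit P f.unop :=
  ⟨fun _ => h.1 (inferInstanceAs (IsSplitMono f.unop.op)), fun _ hW u hu =>
    let ⟨v, hv⟩ := h.2 _ hW u.op fun _ => hu (isSplitEpi_unop u.op)
    ⟨v.unop, congrArg Quiver.Hom.unop hv⟩⟩

end Category

variable {𝒜 : Type u} [Category.{v} 𝒜] [Abelian 𝒜] {P : ObjectProperty 𝒜}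

instance [P.IsClosedUnderExtensions] : P.op.IsClosedUnderExtensions where
  prop_X₂_of_shortExact hS h₁ h₃ := P.prop_X₂_of_shortExact hS.unop h₃ h₁

theorem IsIndec.op {X : 𝒜} (hX : IsIndec X) : IsIndec (op X) :=
  ⟨fun h => hX.1 h.unop, fun e he =>
    (hX.2 e.unop (congrArg Quiver.Hom.unop he)).imp (fun h => congrArg Quiver.Hom.op h)
      fun h => congrArg Quiver.Hom.op h⟩

theorem IsIndec.unop {X : 𝒜ᵒᵖ} (hX : IsIndec X) : IsIndec (unop X) :=
  ⟨fun h => hX.1 h.op, fun e he =>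
    (hX.2 e.op (congrArg Quiver.Hom.op he)).imp (fun h => congrArg Quiver.Hom.unop h)
      fun h => congrArg Quiver.Hom.unop h⟩

theorem IsDefectPair.op {M N : 𝒜} (h : IsDefectPair M N) : IsDefectPair (op N) (op M) := by
  intro X Y Z f g hfg
  refine ⟨fun H k => ?_, fun H k => ?_⟩
  · obtain ⟨l, hl⟩ := (h _ _ hfg.unop).2 (fun k' =>
      let ⟨l, hl⟩ := H k'.op
      ⟨l.unop, congrArg Quiver.Hom.unop hl⟩) k.unop
    exact ⟨l.op, congrArg Quiver.Hom.op hl⟩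
  · obtain ⟨l, hl⟩ := (h _ _ hfg.unop).1 (fun k' =>
      let ⟨l, hl⟩ := H k'.op
      ⟨l.unop, congrArg Quiver.Hom.unop hl⟩) k.unop
    exact ⟨l.op, congrArg Quiver.Hom.op hl⟩

theorem IsAlmostSplitSequence.unop {X Y Z : 𝒜ᵒᵖ} {f : X ⟶ Y} {g : Y ⟶ Z}
    (h : IsAlmostSplitSequence P.op f g) : IsAlmostSplitSequence P g.unop f.unop :=
  ⟨h.prop_right, h.prop_middle, h.prop_left, h.isShortExact.unop, h.isIndec_right.unop,
    h.isIndec_left.unop, h.isLeftAlmostSplit.unop, h.isRightAlmostSplit.unop⟩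

theorem exists_isAlmostSplitSequence_left (R : Type*) [CommRing R] [IsArtinianRing R]
    [Linear R 𝒜] [P.IsClosedUnderExtensions] [P.IsStableUnderRetracts]
    (hfin : ∀ X, P X → Module.Finite R (X ⟶ X)) {X Y Z M S : 𝒜} (hX : P X) (hZ : P Z)
    (hXindec : IsIndec X) (hMX : IsDefectPair M X) {φ : M ⟶ S} (hφ : IsLeftApproximation P φ)
    {f : X ⟶ Y} {g : Y ⟶ Z} (hfg : IsShortExact f g) (hf : ¬ IsSplitMono f) :
    ∃ (Y' Z' : 𝒜) (f' : X ⟶ Y') (g' : Y' ⟶ Z'), IsAlmostSplitSequence P f' g' := by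
  obtain ⟨_, _, _, _, h⟩ := exists_isAlmostSplitSequence_right (P := P.op) R
    (fun W hW => have := hfin _ hW; inferInstance) (X := op Z) hZ hX hXindec.op hMX.op hφ.op
    hfg.op fun _ => hf (isSplitMono_unop f.op)
  exact ⟨_, _, _, _, h.unop⟩

end Opposite

/-! ### Dualizing modules -/

section Essential

variable {R : Type*} [Ring R] {S Q : Type*} [AddCommGroup S] [Module R S]
  [AddCommGroup Q] [Module R Q]

/-- An essential monomorphism: every nonzero submodule of the codomain meets the range. -/
def IsEssential (j : S →ₗ[R] Q) : Prop :=
  Function.Injective j ∧ ∀ N : Submodule R Q, Disjoint (LinearMap.range j) N → N = ⊥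

theorem IsEssential.injective_of_comp {j : S →ₗ[R] Q} (hj : IsEssential j) {M : Type*}
    [AddCommGroup M] [Module R M] {f : Q →ₗ[R] M} (hf : Function.Injective (f ∘ₗ j)) :
    Function.Injective f := by
  refine LinearMap.ker_eq_bot.1 (hj.2 _ (disjoint_iff_inf_le.2 ?_))
  rintro _ ⟨⟨x, rfl⟩, hx⟩
  have : x = 0 := hf (by simpa using hx)
  simp [this]

theorem IsEssential.mem_range_of_isSimpleModule {j : S →ₗ[R] Q} (hj : IsEssential j) {M : Type*}
    [AddCommGroup M] [Module R M] [IsSimpleModule R M] (h : M →ₗ[R] Q) (x : M) :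
    h x ∈ LinearMap.range j := by
  rcases eq_bot_or_eq_top ((LinearMap.range j).comap h) with hbot | htop
  · have hrange : LinearMap.range h = ⊥ := hj.2 _ (disjoint_iff_inf_le.2 (by
      rintro _ ⟨hy, ⟨y, rfl⟩⟩
      have : y = 0 := (Submodule.mem_bot R).1 (hbot ▸ hy)
      simp [this]))
    simp [LinearMap.range_eq_bot.1 hrange]
  · exact htop.ge (Submodule.mem_top (x := x))

theorem exists_isEssential_mkQ_comp {j : S →ₗ[R] Q} (hj : Function.Injective j) :
    ∃ C : Submodule R Q, IsEssential (C.mkQ ∘ₗ j) := by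
  obtain ⟨C, hC⟩ := zorn_le₀ {C : Submodule R Q | Disjoint (LinearMap.range j) C}
    fun c hc hchain => ⟨sSup c, hchain.directedOn.disjoint_sSup_right.2 hc, fun _ => le_sSup⟩
  have hmem {x : S} (hx : j x ∈ C) : j x = 0 :=
    (Submodule.mem_bot R).1 (hC.1.le_bot ⟨⟨x, rfl⟩, hx⟩)
  refine ⟨C, (injective_iff_map_eq_zero _).2 fun x hx => hj ?_, fun N hN => ?_⟩
  · rw [map_zero]
    exact hmem (by simpa using hx)
  have hdisj : Disjoint (LinearMap.range j) (N.comap C.mkQ) := disjoint_iff_inf_le.2 (by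
    rintro _ ⟨⟨x, rfl⟩, hx⟩
    have h0 : C.mkQ (j x) = 0 := (Submodule.mem_bot R).1 (hN.le_bot ⟨⟨x, rfl⟩, hx⟩)
    exact (Submodule.mem_bot R).2 (hmem (by simpa using h0)))
  have hle : N.comap C.mkQ ≤ C := hC.2 hdisj (Submodule.le_comap_mkQ C N)
  rw [← Submodule.map_comap_eq_of_surjective C.mkQ_surjective N, eq_bot_iff,
    Submodule.map_le_iff_le_comap, Submodule.comap_bot, Submodule.ker_mkQ]
  exact hle

end Essential

theorem IsEssential.injective_quotient {R : Type*} [Ring R] {S Q : Type u}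
    [AddCommGroup S] [Module R S] [AddCommGroup Q] [Module R Q] [hQ : Module.Injective R Q]
    {j : S →ₗ[R] Q} {C : Submodule R Q} (hC : IsEssential (C.mkQ ∘ₗ j))
    [IsArtinian R (Q ⧸ C)] : Module.Injective R (Q ⧸ C) := by
  obtain ⟨t, ht⟩ := hQ.out _ hC.1 j
  have hinj : Function.Injective (C.mkQ ∘ₗ t) := hC.injective_of_comp (by
    convert hC.1 using 2
    exact LinearMap.ext fun x => congrArg C.mkQ (ht x))
  let e := LinearEquiv.ofBijective _ (IsArtinian.bijective_of_injective_endomorphism _ hinj)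
  refine ⟨fun X Y _ _ _ _ f hf g => ?_⟩
  obtain ⟨h, hh⟩ := hQ.out f hf (t ∘ₗ e.symm.toLinearMap ∘ₗ g)
  exact ⟨C.mkQ ∘ₗ h, fun x => (congrArg C.mkQ (hh x)).trans (e.apply_symm_apply (g x))⟩

theorem smul_quotient_eq_zero {R : Type*} [CommRing R] {I : Ideal R} {r : R} (hr : r ∈ I)
    (x : R ⧸ I) : r • x = 0 := by
  rw [Algebra.smul_def, Ideal.Quotient.algebraMap_eq, Ideal.Quotient.eq_zero_iff_mem.2 hr, zero_mul]

theorem IsEssential.length_hom_quotient_le_one {R : Type*} [CommRing R] {Q : Type*} [AddCommGroup Q]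
    [Module R Q] {j : (∀ m : MaximalSpectrum R, R ⧸ m.asIdeal) →ₗ[R] Q} (hj : IsEssential j)
    (m : Ideal R) [hm : m.IsMaximal] : Module.length R ((R ⧸ m) →ₗ[R] Q) ≤ 1 := by
  have : IsSimpleModule R (R ⧸ m) := isSimpleModule_iff_quot_maximal.2 ⟨m, hm, ⟨.refl _ _⟩⟩
  let ev : ((R ⧸ m) →ₗ[R] Q) →ₗ[R] LinearMap.range j :=
    (LinearMap.applyₗ 1).codRestrict _ fun h => hj.mem_range_of_isSimpleModule h 1
  let φ : ((R ⧸ m) →ₗ[R] Q) →ₗ[R] R ⧸ m :=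
    LinearMap.proj (⟨m, hm⟩ : MaximalSpectrum R) ∘ₗ
      (LinearEquiv.ofInjective j hj.1).symm.toLinearMap ∘ₗ ev
  rw [← Module.length_eq_one (R := R) (M := R ⧸ m)]
  refine Module.length_le_of_injective φ ((injective_iff_map_eq_zero φ).2 fun h hh => ?_)
  obtain ⟨s, hs⟩ : ∃ s, s = (LinearEquiv.ofInjective j hj.1).symm (ev h) := ⟨_, rfl⟩
  have hjs : j s = h 1 := by
    rw [hs]
    exact congrArg Subtype.val ((LinearEquiv.ofInjective j hj.1).apply_symm_apply (ev h))
  have hsm : s ⟨m, hm⟩ = 0 := by rwa [hs]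
  have hms (r : R) (hr : r ∈ m) : r • s = 0 := hj.1 (by
    rw [map_smul, hjs, map_zero, ← map_smul, smul_quotient_eq_zero hr, map_zero])
  have hs0 : s = 0 := by
    funext n
    by_cases hn : n = ⟨m, hm⟩
    · rw [hn, hsm, Pi.zero_apply]
    have := n.isMaximal
    obtain ⟨a, ha, b, hb, hab⟩ := Submodule.mem_sup.1
      ((Ideal.IsMaximal.coprime_of_ne hm this fun h => hn (MaximalSpectrum.ext h.symm)).ge
        (Submodule.mem_top (x := (1 : R))))
    rw [← one_smul R (s n), ← hab, add_smul, ← Pi.smul_apply, hms a ha, smul_quotient_eq_zero hb,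
      Pi.zero_apply, add_zero]
  ext
  rw [LinearMap.comp_apply, Submodule.mkQ_apply, Ideal.Quotient.mk_eq_mk, map_one, ← hjs, hs0,
    map_zero, LinearMap.zero_comp, LinearMap.zero_apply]

/-- A dualizing module over a commutative Artinian ring: `M ↦ (M →ₗ[R] E)` is a duality on finitely
generated modules. -/
structure IsDualizing (R E : Type u) [CommRing R] [AddCommGroup E] [Module R E] : Prop where
  finite : Module.Finite R E
  injective : Module.Injective R E
  exists_apply_ne_zero : ∀ {M : Type u} [AddCommGroup M] [Module R M] {x : M}, x ≠ 0 →
    ∃ f : M →ₗ[R] E, f x ≠ 0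
  length_hom_le : ∀ (M : Type u) [AddCommGroup M] [Module R M], IsFiniteLength R M →
    Module.length R (M →ₗ[R] E) ≤ Module.length R M

theorem length_hom_le_of_isFiniteLength {R : Type*} [CommRing R] {E : Type*} [AddCommGroup E]
    [Module R E] (hE : ∀ (m : Ideal R) [m.IsMaximal], Module.length R ((R ⧸ m) →ₗ[R] E) ≤ 1)
    {M : Type*} [AddCommGroup M] [Module R M] (hM : IsFiniteLength R M) :
    Module.length R (M →ₗ[R] E) ≤ Module.length R M := by
  induction hM with
  | of_subsingleton => simp
  | @of_simple_quotient M _ _ N hN _ ih =>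
    obtain ⟨m, hm, ⟨e⟩⟩ := isSimpleModule_iff_quot_maximal.1 hN
    have hquot : Module.length R ((M ⧸ N) →ₗ[R] E) ≤ 1 :=
      (e.congrLeft E R).length_eq.trans_le (hE m)
    let ρ := N.subtype.lcomp R E
    have hex : Function.Exact (N.mkQ.lcomp R E) ρ.rangeRestrict := fun h => by
      rw [← LinearMap.exact_lcomp_of_exact_of_surjective E (LinearMap.exact_subtype_mkQ N)
        N.mkQ_surjective h, Subtype.ext_iff]
      rfl
    calc Module.length R (M →ₗ[R] E)
        = Module.length R ((M ⧸ N) →ₗ[R] E) + Module.length R (LinearMap.range ρ) :=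
          Module.length_eq_add_of_exact (N.mkQ.lcomp R E) ρ.rangeRestrict
            (LinearMap.lcomp_injective_of_surjective _ N.mkQ_surjective)
            (LinearMap.surjective_rangeRestrict ρ) hex
      _ ≤ 1 + Module.length R N :=
          add_le_add hquot
            ((Module.length_le_of_injective _ (Submodule.subtype_injective _)).trans ih)
      _ = Module.length R M := by
          rw [Module.length_eq_add_of_exact N.subtype N.mkQ N.subtype_injective N.mkQ_surjective
            (LinearMap.exact_subtype_mkQ N), Module.length_eq_one R (M ⧸ N), add_comm]

theorem exists_apply_ne_zero_of_injective {R E : Type u} [CommRing R] [AddCommGroup E] [Module R E]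
    [hE : Module.Injective R E]
    (hsep : ∀ (m : Ideal R) [m.IsMaximal], ∃ f : (R ⧸ m) →ₗ[R] E, f ≠ 0)
    {M : Type u} [AddCommGroup M] [Module R M] {x : M} (hx : x ≠ 0) : ∃ f : M →ₗ[R] E, f x ≠ 0 := by
  let t := LinearMap.toSpanSingleton R M x
  obtain ⟨m, hm, hle⟩ := Ideal.exists_le_maximal (LinearMap.ker t)
    fun htop => hx (by simpa [t] using htop.ge (Submodule.mem_top (x := 1)))
  obtain ⟨f, hf⟩ := hsep m
  obtain ⟨h, hh⟩ := hE.out ((LinearMap.ker t).liftQ t le_rfl)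
    (LinearMap.ker_eq_bot.1 (Submodule.ker_liftQ_eq_bot _ _ _ le_rfl)) (f ∘ₗ Submodule.factor hle)
  refine ⟨h, fun h0 => hf ?_⟩
  ext
  calc f 1 = h (t 1) := (hh (Submodule.Quotient.mk 1)).symm
    _ = 0 := by rw [LinearMap.toSpanSingleton_apply, one_smul, h0]

theorem exists_isDualizing (R : Type u) [CommRing R] [IsArtinianRing R] :
    ∃ (E : Type u) (_ : AddCommGroup E) (_ : Module R E), IsDualizing R E := by
  classical
  let S : Type u := ∀ m : MaximalSpectrum R, R ⧸ m.asIdeal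
  obtain ⟨⟨J, hJ, j, hj⟩⟩ := EnoughInjectives.presentation (ModuleCat.of R S)
  have : Module.Injective R J := Module.injective_module_of_injective_object R J
  obtain ⟨C, hC⟩ := exists_isEssential_mkQ_comp ((ModuleCat.mono_iff_injective j).1 hj)
  have hlen (M : Type u) [AddCommGroup M] [Module R M] (hM : IsFiniteLength R M) :=
    length_hom_le_of_isFiniteLength (fun m _ => hC.length_hom_quotient_le_one m) hM
  have hfin : IsFiniteLength R (J ⧸ C) := by
    have hR : IsFiniteLength R R :=
      isFiniteLength_iff_isNoetherian_isArtinian.2 ⟨inferInstance, ‹_›⟩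
    rw [← Module.length_ne_top_iff, ← (LinearMap.ringLmapEquivSelf R R (J ⧸ C)).length_eq]
    exact ne_top_of_le_ne_top (Module.length_ne_top_iff.2 hR) (hlen R hR)
  obtain ⟨hnoeth, hart⟩ := isFiniteLength_iff_isNoetherian_isArtinian.1 hfin
  refine ⟨J ⧸ C, inferInstance, inferInstance, inferInstance, hC.injective_quotient,
    exists_apply_ne_zero_of_injective (hE := hC.injective_quotient) fun m hm => ?_, hlen⟩
  let ι := LinearMap.single R (fun m : MaximalSpectrum R => R ⧸ m.asIdeal) ⟨m, hm⟩
  refine ⟨(C.mkQ ∘ₗ j.hom) ∘ₗ ι, fun h0 => one_ne_zero (α := R ⧸ m) ?_⟩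
  have hι : Function.Injective ((C.mkQ ∘ₗ j.hom) ∘ₗ ι) :=
    hC.1.comp (Pi.single_injective (M := fun m : MaximalSpectrum R => R ⧸ m.asIdeal) ⟨m, hm⟩)
  exact hι (by rw [h0]; rfl)

theorem IsDualizing.bijective_eval {R E : Type u} [CommRing R] [IsArtinianRing R]
    [AddCommGroup E] [Module R E] (hE : IsDualizing R E) (M : Type u) [AddCommGroup M]
    [Module R M] [Module.Finite R M] :
    Function.Bijective (LinearMap.applyₗ : M →ₗ[R] (M →ₗ[R] E) →ₗ[R] E) := by
  have hinj : Function.Injective (LinearMap.applyₗ : M →ₗ[R] (M →ₗ[R] E) →ₗ[R] E) :=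
    (injective_iff_map_eq_zero _).2 fun x hx => by_contra fun h0 =>
      let ⟨f, hf⟩ := hE.exists_apply_ne_zero h0
      hf (LinearMap.congr_fun hx f)
  have hM : IsFiniteLength R M := Module.length_ne_top_iff.1 Module.length_ne_top
  have hDM := hE.length_hom_le M hM
  have hDM' : IsFiniteLength R (M →ₗ[R] E) :=
    Module.length_ne_top_iff.1 (ne_top_of_le_ne_top (Module.length_ne_top_iff.2 hM) hDM)
  have hDDM := hE.length_hom_le _ hDM'
  obtain ⟨_, _⟩ := isFiniteLength_iff_isNoetherian_isArtinian.1 (Module.length_ne_top_iff.1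
    (ne_top_of_le_ne_top (Module.length_ne_top_iff.2 hDM') hDDM))
  refine ⟨hinj, LinearMap.range_eq_top.1 (by_contra fun hne => ?_)⟩
  have := Submodule.length_lt hne
  rw [← (LinearEquiv.ofInjective _ hinj).length_eq] at this
  exact this.not_ge (hDDM.trans hDM)

theorem IsDualizing.exists_fin_forall_apply_eq_zero {R E : Type u} [CommRing R] [IsNoetherianRing R]
    [AddCommGroup E] [Module R E] (hE : IsDualizing R E) (M : Type u) [AddCommGroup M] [Module R M]
    [Module.Finite R M] : ∃ (n : ℕ) (f : Fin n → M →ₗ[R] E), ∀ x, (∀ m, f m x = 0) → x = 0 := by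
  have := hE.finite
  obtain ⟨n, f, hf⟩ := Module.Finite.exists_fin (R := R) (M := M →ₗ[R] E)
  refine ⟨n, f, fun x hx => by_contra fun h0 => ?_⟩
  obtain ⟨g, hg⟩ := hE.exists_apply_ne_zero h0
  have hle : Submodule.span R (Set.range f) ≤ LinearMap.ker (LinearMap.applyₗ x) :=
    Submodule.span_le.2 (by rintro _ ⟨m, rfl⟩; exact hx m)
  exact hg (hle (hf.ge (Submodule.mem_top (x := g))))

/-! ### Auslander's defect formula -/

section NakayamaPairing

variable {R E : Type v} [CommRing R] [AddCommGroup E] [Module R E]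

theorem IsDualizing.exists_apply_ne_zero_of_notMem (hE : IsDualizing R E) {M : Type v}
    [AddCommGroup M] [Module R M] {S : Submodule R M} {x : M} (hx : x ∉ S) :
    ∃ φ : M →ₗ[R] E, (∀ y ∈ S, φ y = 0) ∧ φ x ≠ 0 := by
  obtain ⟨φ, hφ⟩ := hE.exists_apply_ne_zero (x := S.mkQ x) (by simpa using hx)
  exact ⟨φ ∘ₗ S.mkQ, fun y hy => by simp [(Submodule.Quotient.mk_eq_zero S).2 hy], hφ⟩

/-- If `f` induces an injection `M ⧸ A → N ⧸ B`, functionals vanishing on `A` extend to functionals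
vanishing on `B`. -/
theorem IsDualizing.exists_extend (hE : IsDualizing R E) {M N : Type v} [AddCommGroup M]
    [Module R M] [AddCommGroup N] [Module R N] {f : M →ₗ[R] N} {A : Submodule R M}
    {B : Submodule R N} (hf : B.comap f = A) {φ : M →ₗ[R] E} (hφ : ∀ x ∈ A, φ x = 0) :
    ∃ ψ : N →ₗ[R] E, (∀ x, ψ (f x) = φ x) ∧ ∀ y ∈ B, ψ y = 0 := by
  have hinj : Function.Injective (A.mapQ B f hf.ge) :=
    LinearMap.ker_eq_bot.1 (by rw [Submodule.mapQ, Submodule.ker_liftQ, LinearMap.ker_comp,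
      Submodule.ker_mkQ, hf, Submodule.mkQ_map_self])
  obtain ⟨ψ, hψ⟩ := hE.injective.out _ hinj (A.liftQ φ hφ)
  exact ⟨ψ ∘ₗ B.mkQ, fun x => hψ (A.mkQ x), fun y hy => by
    simp [(Submodule.Quotient.mk_eq_zero B).2 hy]⟩

variable {𝒜 : Type u} [Category.{v} 𝒜]

section Pairing

variable [Preadditive 𝒜] [Linear R 𝒜]

/-- The pairing `f, g ↦ e (f ≫ g)` identifies `W ⟶ I` with the `E`-dual of `P ⟶ W`, naturally in
`W`; that is, `I` is the Nakayama translate of the projective object `P`. -/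
def IsNakayamaPairing {P I : 𝒜} (e : (P ⟶ I) →ₗ[R] E) : Prop :=
  ∀ (W : 𝒜) (φ : (P ⟶ W) →ₗ[R] E), ∃! g : W ⟶ I, ∀ f : P ⟶ W, e (f ≫ g) = φ f

variable {P I P₀ P₁ I₀ I₁ : 𝒜} {e : (P ⟶ I) →ₗ[R] E} {e₀ : (P₀ ⟶ I₀) →ₗ[R] E}
  {e₁ : (P₁ ⟶ I₁) →ₗ[R] E}

theorem IsNakayamaPairing.exists_hom (h : IsNakayamaPairing e) {W : 𝒜} (φ : (P ⟶ W) →ₗ[R] E) :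
    ∃ g : W ⟶ I, ∀ f : P ⟶ W, e (f ≫ g) = φ f :=
  (h W φ).exists

theorem IsNakayamaPairing.hom_ext (h : IsNakayamaPairing e) {W : 𝒜} {g g' : W ⟶ I}
    (hg : ∀ f : P ⟶ W, e (f ≫ g) = e (f ≫ g')) : g = g' :=
  (h W (e ∘ₗ Linear.rightComp R P g')).unique hg fun _ => rfl

theorem IsNakayamaPairing.hom_eq_zero (h : IsNakayamaPairing e) {W : 𝒜} {g : W ⟶ I}
    (hg : ∀ f : P ⟶ W, e (f ≫ g) = 0) : g = 0 :=
  h.hom_ext fun f => by rw [hg, comp_zero, map_zero]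

theorem IsNakayamaPairing.projective (h : IsNakayamaPairing e) (hE : IsDualizing R E) :
    Projective P where
  factors {Y Z} s g _ := by
    by_contra hs
    obtain ⟨φ, hφ, hφs⟩ := hE.exists_apply_ne_zero_of_notMem
      (S := LinearMap.range (Linear.rightComp R P g)) (x := s) (fun ⟨t, ht⟩ => hs ⟨t, ht⟩)
    obtain ⟨k, hk⟩ := h.exists_hom φ
    have hgk : g ≫ k = 0 := h.hom_eq_zero fun f => by
      rw [← Category.assoc, hk]
      exact hφ _ ⟨f, rfl⟩
    have hk0 : k = 0 := by rwa [← cancel_epi g, comp_zero]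
    exact hφs (by rw [← hk, hk0, comp_zero, map_zero])

/-- `a` and `b` correspond to each other under the Nakayama functor. -/
def IsNakayamaAdjoint (e₀ : (P₀ ⟶ I₀) →ₗ[R] E) (e₁ : (P₁ ⟶ I₁) →ₗ[R] E) (a : P₁ ⟶ P₀)
    (b : I₁ ⟶ I₀) : Prop :=
  ∀ x : P₀ ⟶ I₁, e₁ (a ≫ x) = e₀ (x ≫ b)

theorem IsNakayamaPairing.exists_isNakayamaAdjoint_right (h₀ : IsNakayamaPairing e₀)
    (e₁ : (P₁ ⟶ I₁) →ₗ[R] E) (a : P₁ ⟶ P₀) : ∃ b : I₁ ⟶ I₀, IsNakayamaAdjoint e₀ e₁ a b :=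
  let ⟨b, hb⟩ := h₀.exists_hom (e₁ ∘ₗ Linear.leftComp R I₁ a)
  ⟨b, fun x => (hb x).symm⟩

theorem IsNakayamaPairing.exists_isNakayamaAdjoint_left [IsArtinianRing R]
    (h₁ : IsNakayamaPairing e₁) (hE : IsDualizing R E) [Module.Finite R (P₁ ⟶ P₀)]
    (e₀ : (P₀ ⟶ I₀) →ₗ[R] E) (b : I₁ ⟶ I₀) : ∃ a : P₁ ⟶ P₀, IsNakayamaAdjoint e₀ e₁ a b := by
  let D : (P₀ ⟶ I₁) →ₗ[R] ((P₁ ⟶ P₀) →ₗ[R] E) :=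
    LinearMap.mk₂ R (fun x a => e₁ (a ≫ x)) (by simp) (by simp) (by simp) (by simp)
  have hD : Function.Bijective D :=
    ⟨fun x x' hx => h₁.hom_ext (LinearMap.congr_fun hx), fun φ =>
      (h₁.exists_hom φ).imp fun _ hx => LinearMap.ext hx⟩
  obtain ⟨a, ha⟩ := (hE.bijective_eval (P₁ ⟶ P₀)).2
    (e₀ ∘ₗ Linear.rightComp R P₀ b ∘ₗ (LinearEquiv.ofBijective D hD).symm.toLinearMap)
  refine ⟨a, fun x => ?_⟩
  simpa [D] using LinearMap.congr_fun ha (D x)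

theorem IsNakayamaAdjoint.comp_eq_zero_iff {a : P₁ ⟶ P₀} {b : I₁ ⟶ I₀}
    (hab : IsNakayamaAdjoint e₀ e₁ a b) (h₀ : IsNakayamaPairing e₀) {W : 𝒜} (h : W ⟶ I₁) :
    h ≫ b = 0 ↔ ∀ x : P₀ ⟶ W, e₁ (a ≫ x ≫ h) = 0 := by
  refine ⟨fun hb x => ?_, fun hx => h₀.hom_eq_zero fun x => ?_⟩
  · rw [hab, Category.assoc, hb, comp_zero, map_zero]
  · rw [← Category.assoc, ← hab, hx]

end Pairing

variable [Abelian 𝒜]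

/-- The snake lemma for `Hom (P₁, -)` and `Hom (P₀, -)` applied to a short exact sequence. -/
theorem IsShortExact.forall_exists_lift_cokernel_iff {X Y Z P₀ P₁ : 𝒜} {f : X ⟶ Y} {g : Y ⟶ Z}
    (hfg : IsShortExact f g) [Projective P₀] (a : P₁ ⟶ P₀) :
    (∀ s : cokernel a ⟶ Z, ∃ t, t ≫ g = s) ↔
      ∀ (p : P₁ ⟶ X) (q : P₀ ⟶ Y), p ≫ f = a ≫ q → ∃ q' : P₀ ⟶ X, a ≫ q' = p := by
  have := hfg.mono
  have := hfg.epi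
  constructor
  · intro hlift p q hpq
    obtain ⟨t, ht⟩ := hlift (cokernel.desc a (q ≫ g) (by
      rw [← reassoc_of% hpq, hfg.comp_eq_zero, comp_zero]))
    obtain ⟨q', hq'⟩ := hfg.exists_lift (q - cokernel.π a ≫ t) (by simp [ht])
    exact ⟨q', by rw [← cancel_mono f, Category.assoc, hq']; simp [hpq]⟩
  · intro hfac s
    let q := Projective.factorThru (cokernel.π a ≫ s) g
    have hq : q ≫ g = cokernel.π a ≫ s := Projective.factorThru_comp _ _
    obtain ⟨p, hp⟩ := hfg.exists_lift (a ≫ q) (by simp [hq])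
    obtain ⟨q', rfl⟩ := hfac p q hp
    refine ⟨cokernel.desc a (q - q' ≫ f) (by simp [← hp]), ?_⟩
    simp [← cancel_epi (cokernel.π a), hq, hfg.comp_eq_zero]

theorem IsNakayamaAdjoint.forall_exists_extend_kernel_iff [Linear R 𝒜] (hE : IsDualizing R E)
    {P₀ P₁ I₀ I₁ X Y : 𝒜} {e₀ : (P₀ ⟶ I₀) →ₗ[R] E} {e₁ : (P₁ ⟶ I₁) →ₗ[R] E}
    (h₀ : IsNakayamaPairing e₀) (h₁ : IsNakayamaPairing e₁) {a : P₁ ⟶ P₀} {b : I₁ ⟶ I₀}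
    (hab : IsNakayamaAdjoint e₀ e₁ a b) (f : X ⟶ Y) :
    (∀ h : X ⟶ kernel b, ∃ k, f ≫ k = h) ↔
      ∀ (p : P₁ ⟶ X) (q : P₀ ⟶ Y), p ≫ f = a ≫ q → ∃ q' : P₀ ⟶ X, a ≫ q' = p := by
  constructor
  · intro hext p q hpq
    by_contra hp
    obtain ⟨φ, hφ, hφp⟩ := hE.exists_apply_ne_zero_of_notMem
      (S := LinearMap.range (Linear.leftComp R X a)) (x := p) hp
    obtain ⟨h, hh⟩ := h₁.exists_hom φ
    have hb : h ≫ b = 0 := (hab.comp_eq_zero_iff h₀ h).2 fun x => by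
      rw [← Category.assoc, hh]
      exact hφ _ ⟨x, rfl⟩
    obtain ⟨k, hk⟩ := hext (kernel.lift b h hb)
    have hk' : f ≫ k ≫ kernel.ι b = h := by rw [reassoc_of% hk, kernel.lift_ι]
    refine hφp ?_
    rw [← hh, ← hk', reassoc_of% hpq]
    exact (hab.comp_eq_zero_iff h₀ (k ≫ kernel.ι b)).1 (by simp) q
  · intro hfac h
    obtain ⟨ψ, hψf, hψa⟩ := hE.exists_extend (f := Linear.rightComp R P₁ f)
      (A := LinearMap.range (Linear.leftComp R X a)) (B := LinearMap.range (Linear.leftComp R Y a))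
      (φ := e₁ ∘ₗ Linear.rightComp R P₁ (h ≫ kernel.ι b)) (by
        ext p
        constructor
        · rintro ⟨q, hq⟩
          exact hfac p q hq.symm
        · rintro ⟨q, rfl⟩
          exact ⟨q ≫ f, by simp⟩) (by
        rintro _ ⟨x, rfl⟩
        simpa using (hab.comp_eq_zero_iff h₀ (h ≫ kernel.ι b)).1 (by simp) x)
    obtain ⟨k, hk⟩ := h₁.exists_hom ψ
    have hb : k ≫ b = 0 := (hab.comp_eq_zero_iff h₀ k).2 fun x => by
      rw [← Category.assoc, hk]
      exact hψa _ ⟨x, rfl⟩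
    refine ⟨kernel.lift b k hb, ?_⟩
    rw [← cancel_mono (kernel.ι b), Category.assoc, kernel.lift_ι]
    exact h₁.hom_ext fun p => by rw [← Category.assoc, hk]; exact hψf p

theorem IsNakayamaAdjoint.isDefectPair [Linear R 𝒜] (hE : IsDualizing R E)
    {P₀ P₁ I₀ I₁ : 𝒜} {e₀ : (P₀ ⟶ I₀) →ₗ[R] E} {e₁ : (P₁ ⟶ I₁) →ₗ[R] E}
    (h₀ : IsNakayamaPairing e₀) (h₁ : IsNakayamaPairing e₁) {a : P₁ ⟶ P₀} {b : I₁ ⟶ I₀}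
    (hab : IsNakayamaAdjoint e₀ e₁ a b) : IsDefectPair (cokernel a) (kernel b) := by
  intro X Y Z f g hfg
  have := h₀.projective hE
  rw [hfg.forall_exists_lift_cokernel_iff, hab.forall_exists_extend_kernel_iff hE h₀ h₁]

end NakayamaPairing

section DefectPair

variable {R E : Type v} [CommRing R] [AddCommGroup E] [Module R E]
  {𝒜 : Type u} [Category.{v} 𝒜] [Abelian 𝒜]

theorem IsDefectPair.of_iso {M M' N N' : 𝒜} (h : IsDefectPair M N) (α : M ≅ M') (β : N ≅ N') :
    IsDefectPair M' N' := by
  intro X Y Z f g hfg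
  have hM : (∀ s : M' ⟶ Z, ∃ t, t ≫ g = s) ↔ ∀ s : M ⟶ Z, ∃ t, t ≫ g = s :=
    ⟨fun H s => (H (α.inv ≫ s)).elim fun t ht => ⟨α.hom ≫ t, by simp [ht]⟩,
      fun H s => (H (α.hom ≫ s)).elim fun t ht => ⟨α.inv ≫ t, by simp [ht]⟩⟩
  have hN : (∀ s : X ⟶ N', ∃ t, f ≫ t = s) ↔ ∀ s : X ⟶ N, ∃ t, f ≫ t = s :=
    ⟨fun H s => (H (s ≫ β.hom)).elim fun t ht => ⟨t ≫ β.inv, by simp [reassoc_of% ht]⟩,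
      fun H s => (H (s ≫ β.inv)).elim fun t ht => ⟨t ≫ β.hom, by simp [reassoc_of% ht]⟩⟩
  rw [hM, hN, h f g hfg]

/-- `F` has enough projective and enough injective objects, provided by Nakayama pairings whose
members both belong to `F`. -/
structure HasEnoughNakayamaPairings [Linear R 𝒜] (E : Type v) [AddCommGroup E] [Module R E]
    (F : ObjectProperty 𝒜) : Prop where
  exists_epi : ∀ Z, F Z → ∃ (P I : 𝒜) (e : (P ⟶ I) →ₗ[R] E) (p : P ⟶ Z),
    IsNakayamaPairing e ∧ F P ∧ F I ∧ Epi p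
  exists_mono : ∀ X, F X → ∃ (P I : 𝒜) (e : (P ⟶ I) →ₗ[R] E) (i : X ⟶ I),
    IsNakayamaPairing e ∧ F P ∧ F I ∧ Mono i

variable [Linear R 𝒜] {F : ObjectProperty 𝒜}

theorem HasEnoughNakayamaPairings.exists_isDefectPair_right [F.IsClosedUnderSubobjects]
    (h : HasEnoughNakayamaPairings (R := R) E F) (hE : IsDualizing R E) {Z : 𝒜} (hZ : F Z) :
    ∃ N, F N ∧ IsDefectPair Z N := by
  obtain ⟨P₀, I₀, e₀, p, h₀, hP₀, -, hp⟩ := h.exists_epi Z hZ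
  obtain ⟨P₁, I₁, e₁, q, h₁, -, hI₁, hq⟩ := h.exists_epi _ (F.prop_of_mono (kernel.ι p) hP₀)
  obtain ⟨b, hb⟩ := h₀.exists_isNakayamaAdjoint_right e₁ (q ≫ kernel.ι p)
  exact ⟨kernel b, F.prop_of_mono (kernel.ι b) hI₁, (hb.isDefectPair hE h₀ h₁).of_iso
    (cokernelEpiComp q (kernel.ι p) ≪≫ (cokernelIsCokernel _).coconePointUniqueUpToIso
      (Abelian.epiIsCokernelOfKernel _ (kernelIsKernel p))) (Iso.refl _)⟩

theorem HasEnoughNakayamaPairings.exists_isDefectPair_left [IsArtinianRing R]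
    [F.IsClosedUnderQuotients]
    (h : HasEnoughNakayamaPairings (R := R) E F) (hE : IsDualizing R E)
    (hfin : ∀ X Y, F X → F Y → Module.Finite R (X ⟶ Y)) {X : 𝒜} (hX : F X) :
    ∃ M, F M ∧ IsDefectPair M X := by
  obtain ⟨P₁, I₁, e₁, i, h₁, hP₁, hI₁, hi⟩ := h.exists_mono X hX
  obtain ⟨P₀, I₀, e₀, j, h₀, hP₀, -, hj⟩ := h.exists_mono _ (F.prop_of_epi (cokernel.π i) hI₁)
  have := hfin _ _ hP₁ hP₀
  obtain ⟨a, ha⟩ := h₁.exists_isNakayamaAdjoint_left hE e₀ (cokernel.π i ≫ j)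
  exact ⟨cokernel a, F.prop_of_epi (cokernel.π a) hP₀, (ha.isDefectPair hE h₀ h₁).of_iso
    (Iso.refl _) (kernelCompMono (cokernel.π i) j ≪≫ (kernelIsKernel _).conePointUniqueUpToIso
      (Abelian.monoIsKernelOfCokernel _ (cokernelIsCokernel i)))⟩

end DefectPair

end AlmostSplit

namespace QuivRep

open CategoryTheory Limits

/-! ### The abelian category of representations -/

section Abelian

variable {Λ : Type} [Ring Λ] {V : Type} [Quiver.{1} V]

namespace RepHom

variable {X Y Z : Repn Λ V}

theorem comm_apply_s1 (f : RepHom X Y) {i j : V} (a : i ⟶ j) (x : X.M i) :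
    f.app j (X.h a x) = Y.h a (f.app i x) :=
  (LinearMap.congr_fun (f.comm a) x).symm

instance : Add (RepHom X Y) :=
  ⟨fun f g => ⟨fun i => f.app i + g.app i, fun a => by
    rw [LinearMap.comp_add, f.comm, g.comm, LinearMap.add_comp]⟩⟩

instance : Neg (RepHom X Y) :=
  ⟨fun f => ⟨fun i => -f.app i, fun a => by
    rw [LinearMap.comp_neg, f.comm, LinearMap.neg_comp]⟩⟩

instance : AddCommGroup (RepHom X Y) where
  nsmul := nsmulRec
  zsmul := zsmulRec
  add_assoc _ _ _ := RepHom.ext (funext fun _ => add_assoc _ _ _)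
  zero_add _ := RepHom.ext (funext fun _ => zero_add _)
  add_zero _ := RepHom.ext (funext fun _ => add_zero _)
  neg_add_cancel _ := RepHom.ext (funext fun _ => neg_add_cancel _)
  add_comm _ _ := RepHom.ext (funext fun _ => add_comm _ _)

end RepHom

instance : Category (Repn Λ V) where
  Hom := RepHom
  id := RepHom.id
  comp f g := g.comp f

instance : Preadditive (Repn Λ V) where
  homGroup := inferInstanceAs (∀ X Y : Repn Λ V, AddCommGroup (RepHom X Y))
  add_comp _ _ _ _ _ _ := RepHom.ext (funext fun _ => LinearMap.comp_add _ _ _)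
  comp_add _ _ _ _ _ _ := RepHom.ext (funext fun _ => LinearMap.add_comp _ _ _)

namespace Repn

variable {X Y Z : Repn Λ V}

theorem hom_ext {f g : X ⟶ Y} (h : ∀ i x, f.app i x = g.app i x) : f = g :=
  RepHom.ext (funext fun i => LinearMap.ext (h i))

@[simp] theorem comp_app (f : X ⟶ Y) (g : Y ⟶ Z) (i : V) :
    (f ≫ g).app i = g.app i ∘ₗ f.app i := rfl

@[simp] theorem add_app (f g : X ⟶ Y) (i : V) : (f + g).app i = f.app i + g.app i := rfl

/-- Representations of a quiver are functors on its path category. -/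
def toFunctor (Λ : Type) [Ring Λ] (V : Type) [Quiver.{1} V] :
    Repn Λ V ⥤ (Paths V ⥤ ModuleCat.{0} Λ) where
  obj X := Paths.lift ⟨fun i => ModuleCat.of Λ (X.M i), fun a => ModuleCat.ofHom (X.h a)⟩
  map {X Y} f := Paths.liftNatTrans (fun i => ModuleCat.ofHom (f.app i)) fun a => by
    simp only [Paths.lift_toPath]
    exact ModuleCat.hom_ext (f.comm a).symm

instance : (toFunctor Λ V).Faithful where
  map_injective h :=
    RepHom.ext (funext fun i => congrArg ModuleCat.Hom.hom (NatTrans.congr_app h i))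

instance : (toFunctor Λ V).Full where
  map_surjective {X Y} η := ⟨⟨fun i => (η.app i).hom, fun a => by
    have h := η.naturality a.toPath
    simp only [toFunctor, Paths.lift_toPath] at h
    exact (congrArg ModuleCat.Hom.hom h).symm⟩, rfl⟩

instance : (toFunctor Λ V).EssSurj where
  mem_essImage G := ⟨⟨fun i => G.obj ((Paths.of V).obj i), fun a => (G.map a.toPath).hom⟩,
    ⟨Paths.liftNatIso (fun i => Iso.refl _) fun a => by
      simp only [toFunctor, Paths.lift_toPath]
      exact (Category.comp_id _).trans (Category.id_comp _).symm⟩⟩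

instance : (toFunctor Λ V).IsEquivalence where

instance : HasFiniteProducts (Repn Λ V) where
  out _ := Adjunction.hasLimitsOfShape_of_equivalence (toFunctor Λ V)

noncomputable instance : Abelian (Repn Λ V) :=
  abelianOfEquivalence (toFunctor Λ V)

/-- The exact functor `X ↦ X.M i`. -/
def evaluation (Λ : Type) [Ring Λ] (i : V) : Repn Λ V ⥤ ModuleCat.{0} Λ :=
  toFunctor Λ V ⋙ (CategoryTheory.evaluation _ _).obj ((Paths.of V).obj i)

instance (i : V) : PreservesFiniteLimits (evaluation Λ i) :=
  have : PreservesFiniteLimits ((CategoryTheory.evaluation (Paths V) (ModuleCat Λ)).obj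
    ((Paths.of V).obj i)) := ⟨fun _ _ _ => inferInstance⟩
  comp_preservesFiniteLimits _ _

instance (i : V) : PreservesFiniteColimits (evaluation Λ i) :=
  have : PreservesFiniteColimits ((CategoryTheory.evaluation (Paths V) (ModuleCat Λ)).obj
    ((Paths.of V).obj i)) := ⟨fun _ _ _ => inferInstance⟩
  comp_preservesFiniteColimits _ _

theorem jointlyReflectIsomorphisms_evaluation :
    JointlyReflectIsomorphisms (evaluation Λ : V → Repn Λ V ⥤ ModuleCat Λ) where
  isIso f _ := by
    rw [← isIso_iff_of_reflects_iso f (toFunctor Λ V), NatTrans.isIso_iff_isIso_app]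
    assumption

theorem mono_iff {f : X ⟶ Y} : Mono f ↔ ∀ i, Function.Injective (f.app i) :=
  (jointlyReflectIsomorphisms_evaluation.jointlyReflectMonomorphisms.mono_iff f).trans
    (forall_congr' fun _ => ModuleCat.mono_iff_injective _)

theorem epi_iff {f : X ⟶ Y} : Epi f ↔ ∀ i, Function.Surjective (f.app i) :=
  (jointlyReflectIsomorphisms_evaluation.jointlyReflectEpimorphisms.epi_iff f).trans
    (forall_congr' fun _ => ModuleCat.epi_iff_surjective _)

end Repn

open Repn in
theorem isShortExact_iff_isSES {X Y Z : Repn Λ V} {f : X ⟶ Y} {g : Y ⟶ Z} :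
    AlmostSplit.IsShortExact f g ↔ IsSES f g := by
  have hcomp (h : IsSES f g) : f ≫ g = 0 :=
    hom_ext fun i x => LinearMap.mem_ker.1 ((h.2.2 i).le ⟨x, rfl⟩)
  have hiff (w : f ≫ g = 0) : (ShortComplex.mk f g w).ShortExact ↔ IsSES f g := by
    rw [jointlyReflectIsomorphisms_evaluation.shortExact_iff]
    refine ⟨fun h => ⟨fun i => (h i).moduleCat_injective_f, fun i => (h i).moduleCat_surjective_g,
      fun i => (h i).exact.moduleCat_range_eq_ker⟩, fun ⟨hf, hg, hfg⟩ i => ?_⟩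
    exact
      { exact := (ShortComplex.moduleCat_exact_iff_range_eq_ker _).2 (hfg i)
        mono_f := (ModuleCat.mono_iff_injective _).2 (hf i)
        epi_g := (ModuleCat.epi_iff_surjective _).2 (hg i) }
  exact ⟨fun ⟨w, h⟩ => (hiff w).1 h, fun h => ⟨hcomp h, (hiff _).2 h⟩⟩

theorem isSplitEpi_iff {X Y : Repn Λ V} {f : X ⟶ Y} :
    CategoryTheory.IsSplitEpi f ↔ IsSplitEpi f :=
  ⟨fun ⟨⟨s⟩⟩ => ⟨s.section_, s.id⟩, fun ⟨s, hs⟩ => ⟨⟨⟨s, hs⟩⟩⟩⟩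

theorem isSplitMono_iff {X Y : Repn Λ V} {f : X ⟶ Y} :
    CategoryTheory.IsSplitMono f ↔ IsSplitMono f :=
  ⟨fun ⟨⟨s⟩⟩ => ⟨s.retraction, s.id⟩, fun ⟨s, hs⟩ => ⟨⟨⟨s, hs⟩⟩⟩⟩

open Repn in
theorem isIndec_iff {X : Repn Λ V} : AlmostSplit.IsIndec X ↔ X.Indec := by
  have hzero : Limits.IsZero X ↔ X.IsZero := by
    rw [jointlyReflectIsomorphisms_evaluation.isZero_iff]
    exact forall_congr' fun i => ModuleCat.isZero_iff_subsingleton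
  rw [AlmostSplit.IsIndec, hzero]
  rfl

end Abelian

/-! ### Free and cofree representations -/

section Acyclic

variable {V : Type} [Quiver.{1} V]

/-- The number of vertices from which `i` can be reached, a rank function increasing along the
arrows of an acyclic quiver. -/
noncomputable def depth (i : V) : ℕ :=
  {k : V | Nonempty (Quiver.Path k i)}.ncard

theorem IsAcyclic.depth_lt_depth [Finite V] (hV : IsAcyclic V) {i j : V} (a : i ⟶ j) :
    depth i < depth j := by
  refine Set.ncard_lt_ncard ⟨fun k ⟨p⟩ => ⟨p.cons a⟩, fun hji => ?_⟩
  obtain ⟨p⟩ : Nonempty (Quiver.Path j i) := hji ⟨.nil⟩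
  exact absurd (hV j (p.cons a)) (Quiver.Path.cons_ne_nil p a)

theorem IsAcyclic.finite_path [Finite V] [∀ i j : V, Finite (i ⟶ j)] (hV : IsAcyclic V) (i j : V) :
    Finite (Quiver.Path i j) := by
  induction hn : depth j using Nat.strong_induction_on generalizing j with
  | _ n ih =>
    have hfin (a : Σ k, k ⟶ j) : Finite (Quiver.Path i a.1) :=
      ih _ (hn ▸ hV.depth_lt_depth a.2) _ rfl
    refine Finite.of_surjective (α := PLift (i = j) ⊕ Σ a : Σ k, k ⟶ j, Quiver.Path i a.1)
      (Sum.elim (fun h => h.down ▸ .nil) fun x => x.2.cons x.1.2) fun p => ?_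
    cases p with
    | nil => exact ⟨.inl ⟨rfl⟩, rfl⟩
    | cons p a => exact ⟨.inr ⟨⟨_, a⟩, p⟩, rfl⟩

end Acyclic

section FreeRepn

variable {Λ : Type} [Ring Λ] {V : Type} [Quiver.{1} V]

/-- The action of a path on a representation. -/
def Repn.mapPath (X : Repn Λ V) {i : V} : {j : V} → Quiver.Path i j → (X.M i →ₗ[Λ] X.M j)
  | _, .nil => LinearMap.id
  | _, .cons p a => X.h a ∘ₗ X.mapPath p

theorem Repn.mapPath_comp (X : Repn Λ V) {i j k : V} (p : Quiver.Path i j) (q : Quiver.Path j k) :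
    X.mapPath (p.comp q) = X.mapPath q ∘ₗ X.mapPath p := by
  induction q with
  | nil => rfl
  | cons q a ih => rw [Quiver.Path.comp_cons, mapPath, ih, mapPath, LinearMap.comp_assoc]

theorem RepHom.mapPath_apply {X Y : Repn Λ V} (f : RepHom X Y) {i j : V} (p : Quiver.Path i j)
    (x : X.M i) : f.app j (X.mapPath p x) = Y.mapPath p (f.app i x) := by
  induction p with
  | nil => rfl
  | cons p a ih => simp [Repn.mapPath, f.comm_apply_s1, ih]

variable {K : Type} [∀ i j : V, Finite (Quiver.Path i j)]

/-- The paths starting at one of the vertices `s k` and ending in `i`, as a small type. -/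
abbrev PathsFrom (s : K → V) (i : V) : Type :=
  Shrink.{0} (Σ k, Quiver.Path (s k) i)

/-- The paths starting in `i` and ending at one of the vertices `s k`, as a small type. -/
abbrev PathsTo (s : K → V) (i : V) : Type :=
  Shrink.{0} (Σ k, Quiver.Path i (s k))

namespace PathsFrom

variable {s : K → V}

/-- A path, as an element of the small type of paths. -/
noncomputable def mk {i : V} {k : K} (p : Quiver.Path (s k) i) : PathsFrom s i :=
  equivShrink (Σ k, Quiver.Path (s k) i) ⟨k, p⟩

theorem exists_eq_mk {i : V} (x : PathsFrom s i) :
    ∃ (k : K) (p : Quiver.Path (s k) i), x = mk p :=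
  ⟨_, _, ((equivShrink _).apply_symm_apply x).symm⟩

theorem mk_eq_mk {i : V} {k l : K} {p : Quiver.Path (s k) i} {q : Quiver.Path (s l) i} :
    mk p = mk q ↔ (⟨k, p⟩ : Σ k, Quiver.Path (s k) i) = ⟨l, q⟩ :=
  (equivShrink _).apply_eq_iff_eq

/-- The extension of a path by an arrow at its end. -/
noncomputable def cons {i j : V} (a : i ⟶ j) (x : PathsFrom s i) : PathsFrom s j :=
  mk (((equivShrink (Σ k, Quiver.Path (s k) i)).symm x).2.cons a)

theorem cons_mk {i j : V} (a : i ⟶ j) {k : K} (p : Quiver.Path (s k) i) :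
    cons a (mk p) = mk (p.cons a) :=
  congrArg (fun q : Σ k, Quiver.Path (s k) i => mk (q.2.cons a))
    ((equivShrink _).symm_apply_apply (⟨k, p⟩ : Σ k, Quiver.Path (s k) i))

theorem cons_injective {i j : V} (a : i ⟶ j) : Function.Injective (cons (s := s) a) := fun x y => by
  obtain ⟨k, p, rfl⟩ := exists_eq_mk x
  obtain ⟨l, q, rfl⟩ := exists_eq_mk y
  rw [cons_mk, cons_mk, mk_eq_mk, mk_eq_mk]
  rintro ⟨⟩
  rfl

end PathsFrom

/-- The representation freely generated by one copy of `D` in each of the vertices `s k`. -/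
noncomputable def freeRepn (Λ : Type) [Ring Λ] (s : K → V) (D : Type) [AddCommGroup D]
    [Module Λ D] : Repn Λ V where
  M i := PathsFrom s i →₀ D
  h a := Finsupp.lmapDomain D Λ (PathsFrom.cons a)

/-- The representation cofreely cogenerated by one copy of `D` in each of the vertices `s k`. -/
noncomputable def cofreeRepn (Λ : Type) [Ring Λ] (s : K → V) (D : Type) [AddCommGroup D]
    [Module Λ D] : Repn Λ V where
  M i := PathsTo s i → D
  h a := LinearMap.funLeft Λ D fun p =>
    equivShrink _ ⟨_, a.toPath.comp ((equivShrink (Σ k, Quiver.Path _ (s k))).symm p).2⟩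

namespace freeRepn

variable {s : K → V}

section Coordinates

variable {D : Type} [AddCommGroup D] [Module Λ D]

/-- The coordinate of a free representation given by a path. -/
noncomputable def coord {i : V} {k : K} (p : Quiver.Path (s k) i) :
    (freeRepn Λ s D).M i →ₗ[Λ] D :=
  Finsupp.lapply (PathsFrom.mk p)

theorem ext_coord {i : V} {x y : (freeRepn Λ s D).M i}
    (h : ∀ (k : K) (p : Quiver.Path (s k) i), coord p x = coord p y) : x = y :=
  Finsupp.ext fun p => by
    obtain ⟨k, p, rfl⟩ := PathsFrom.exists_eq_mk p
    exact h k p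

/-- The linear map into a component of a free representation with given coordinates. -/
noncomputable def pi [Finite K] {M : Type} [AddCommGroup M] [Module Λ M] {i : V}
    (c : ∀ k, Quiver.Path (s k) i → (M →ₗ[Λ] D)) : M →ₗ[Λ] (freeRepn Λ s D).M i :=
  let e := (Finsupp.linearEquivFunOnFinite Λ D (PathsFrom s i)).symm
  e.toLinearMap ∘ₗ LinearMap.pi fun p => c _ ((equivShrink (Σ k, Quiver.Path (s k) i)).symm p).2

theorem coord_pi [Finite K] {M : Type} [AddCommGroup M] [Module Λ M] {i : V}
    (c : ∀ k, Quiver.Path (s k) i → (M →ₗ[Λ] D)) {k : K} (p : Quiver.Path (s k) i) (x : M) :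
    coord p (pi c x) = c k p x :=
  congrArg (fun q : Σ k, Quiver.Path (s k) i => c q.1 q.2 x)
    ((equivShrink _).symm_apply_apply (⟨k, p⟩ : Σ k, Quiver.Path (s k) i))

theorem coord_cons_h {i j : V} {k : K} (p : Quiver.Path (s k) i) (a : i ⟶ j)
    (x : (freeRepn Λ s D).M i) : coord (p.cons a) ((freeRepn Λ s D).h a x) = coord p x := by
  refine Eq.trans ?_ (Finsupp.mapDomain_apply (PathsFrom.cons_injective a)
    (x : PathsFrom s i →₀ D) (PathsFrom.mk p))
  rw [PathsFrom.cons_mk]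
  rfl

theorem coord_h_eq_zero {i j : V} {k : K} {q : Quiver.Path (s k) j} {a : i ⟶ j}
    (hq : ∀ p : Quiver.Path (s k) i, q ≠ p.cons a) (x : (freeRepn Λ s D).M i) :
    coord q ((freeRepn Λ s D).h a x) = 0 := by
  refine Finsupp.mapDomain_of_notMem_range (x : PathsFrom s i →₀ D) _ ?_
  rintro ⟨p, hp⟩
  obtain ⟨l, p, rfl⟩ := PathsFrom.exists_eq_mk p
  rw [PathsFrom.cons_mk, PathsFrom.mk_eq_mk] at hp
  cases hp
  exact hq p rfl

/-- The inclusion of the generating copy of `D` at the vertex `s k`. -/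
noncomputable def single (k : K) : D →ₗ[Λ] (freeRepn Λ s D).M (s k) :=
  Finsupp.lsingle (PathsFrom.mk (.nil : Quiver.Path (s k) (s k)))

theorem coord_nil_single (k : K) (d : D) :
    coord (Λ := Λ) (s := s) (k := k) .nil (single k d) = d :=
  Finsupp.single_eq_same ..

theorem coord_cons_single {i : V} {k l : K} (p : Quiver.Path (s l) i) (a : i ⟶ s k) (d : D) :
    coord (Λ := Λ) (p.cons a) (single k d) = 0 :=
  Finsupp.single_eq_of_ne fun h => Nat.succ_ne_zero p.length <|
    congrArg (fun q : Σ l, Quiver.Path (s l) (s k) => q.2.length) (PathsFrom.mk_eq_mk.1 h)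

end Coordinates

/-- The basis element of a free representation given by a path. -/
noncomputable def basis {i : V} {k : K} (p : Quiver.Path (s k) i) : (freeRepn Λ s Λ).M i :=
  Finsupp.single (PathsFrom.mk p) 1

theorem linearMap_ext {M : Type} [AddCommGroup M] [Module Λ M] {i : V}
    {f g : (freeRepn Λ s Λ).M i →ₗ[Λ] M}
    (h : ∀ (k : K) (p : Quiver.Path (s k) i), f (basis p) = g (basis p)) : f = g :=
  Finsupp.lhom_ext' fun p => LinearMap.ext_ring <| by
    obtain ⟨k, p, rfl⟩ := PathsFrom.exists_eq_mk p
    exact h k p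

theorem h_basis {i j : V} {k : K} (p : Quiver.Path (s k) i) (a : i ⟶ j) :
    (freeRepn Λ s Λ).h a (basis p) = basis (p.cons a) :=
  (Finsupp.mapDomain_single ..).trans (by rw [PathsFrom.cons_mk, basis])

theorem mapPath_basis {i : V} {k : K} (p : Quiver.Path (s k) i) :
    (freeRepn Λ s Λ).mapPath p (basis .nil) = basis p := by
  induction p with
  | nil => rfl
  | cons p a ih => rw [Repn.mapPath, LinearMap.comp_apply, ih, h_basis]

variable {W : Repn Λ V} (w : ∀ k, W.M (s k))

/-- The components of the morphism out of a free representation sending the generators to `w`. -/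
noncomputable def liftApp (i : V) : (freeRepn Λ s Λ).M i →ₗ[Λ] W.M i :=
  Finsupp.linearCombination Λ fun p =>
    W.mapPath ((equivShrink (Σ k, Quiver.Path (s k) i)).symm p).2 (w _)

theorem liftApp_basis {i : V} {k : K} (p : Quiver.Path (s k) i) :
    liftApp w i (basis p) = W.mapPath p (w k) :=
  (Finsupp.linearCombination_single ..).trans (by
    rw [PathsFrom.mk, Equiv.symm_apply_apply, one_smul])

/-- The morphism out of a free representation sending the generators to `w`. -/
noncomputable def lift : freeRepn Λ s Λ ⟶ W where
  app := liftApp w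
  comm a := linearMap_ext fun k p => by simp [liftApp_basis, h_basis, Repn.mapPath]

theorem lift_app_basis_nil (k : K) : (lift w).app (s k) (basis .nil) = w k :=
  liftApp_basis w .nil

theorem hom_ext {f g : freeRepn Λ s Λ ⟶ W}
    (h : ∀ k : K, f.app (s k) (basis .nil) = g.app (s k) (basis .nil)) : f = g :=
  RepHom.ext <| funext fun i => linearMap_ext fun k p => by
    rw [← mapPath_basis, f.mapPath_apply, g.mapPath_apply, h]

end freeRepn

namespace cofreeRepn

variable {s : K → V} {D : Type} [AddCommGroup D] [Module Λ D]

/-- The coordinate of a cofree representation given by a path. -/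
noncomputable def coord {i : V} {k : K} (p : Quiver.Path i (s k)) :
    (cofreeRepn Λ s D).M i →ₗ[Λ] D :=
  LinearMap.proj (equivShrink (Σ k, Quiver.Path i (s k)) ⟨k, p⟩)

theorem ext_coord {i : V} {x y : (cofreeRepn Λ s D).M i}
    (h : ∀ (k : K) (p : Quiver.Path i (s k)), coord p x = coord p y) : x = y :=
  funext fun p => by
    obtain ⟨⟨k, p⟩, rfl⟩ := (equivShrink _).surjective p
    exact h k p

theorem coord_h {i j : V} {k : K} (a : i ⟶ j) (p : Quiver.Path j (s k))
    (x : (cofreeRepn Λ s D).M i) :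
    coord p ((cofreeRepn Λ s D).h a x) = coord (a.toPath.comp p) x :=
  congrArg (fun q : Σ k, Quiver.Path j (s k) => (x : PathsTo s i → D)
    (equivShrink (Σ k, Quiver.Path i (s k)) ⟨_, a.toPath.comp q.2⟩))
    ((equivShrink _).symm_apply_apply (⟨k, p⟩ : Σ k, Quiver.Path j (s k)))

theorem coord_mapPath {i j : V} {k : K} (p : Quiver.Path i j) (q : Quiver.Path j (s k))
    (x : (cofreeRepn Λ s D).M i) :
    coord q ((cofreeRepn Λ s D).mapPath p x) = coord (p.comp q) x := by
  induction p with
  | nil => simp [Repn.mapPath]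
  | cons p a ih =>
    rw [Repn.mapPath, LinearMap.comp_apply, coord_h, ih, ← Quiver.Path.comp_assoc]
    rfl

variable {W : Repn Λ V} (ψ : ∀ k, W.M (s k) →ₗ[Λ] D)

/-- The components of the morphism into a cofree representation with coordinates `ψ`. -/
noncomputable def liftApp (i : V) : W.M i →ₗ[Λ] (cofreeRepn Λ s D).M i :=
  LinearMap.pi fun p =>
    ψ _ ∘ₗ W.mapPath ((equivShrink (Σ k, Quiver.Path i (s k))).symm p).2

theorem coord_liftApp {i : V} {k : K} (p : Quiver.Path i (s k)) (x : W.M i) :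
    coord p (liftApp ψ i x) = ψ k (W.mapPath p x) := by
  change ψ _ (W.mapPath _ x) = _
  rw [Equiv.symm_apply_apply]

/-- The morphism into a cofree representation with coordinates `ψ`. -/
noncomputable def lift : W ⟶ cofreeRepn Λ s D where
  app := liftApp ψ
  comm a := LinearMap.ext fun x => ext_coord fun k p => by
    simp only [LinearMap.comp_apply, coord_liftApp, coord_h, Repn.mapPath_comp]
    rfl

theorem coord_nil_lift_app (k : K) (x : W.M (s k)) : coord .nil ((lift ψ).app (s k) x) = ψ k x :=
  coord_liftApp ψ .nil x

theorem hom_ext {f g : W ⟶ cofreeRepn Λ s D}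
    (h : ∀ (k : K) (x : W.M (s k)), coord .nil (f.app (s k) x) = coord .nil (g.app (s k) x)) :
    f = g :=
  Repn.hom_ext fun i x => ext_coord fun k p => by
    rw [← p.comp_nil, ← coord_mapPath, ← f.mapPath_apply, h, g.mapPath_apply, coord_mapPath]

end cofreeRepn

end FreeRepn

section Coinduced

variable (R Λ E : Type) [CommRing R] [Ring Λ] [Algebra R Λ] [AddCommGroup E] [Module R E]

/-- The coinduced module `Hom_R(Λ, E)`, on which `Λ` acts by `(a • f) x = f (x * a)`. -/
def Coinduced : Type :=
  Λ →ₗ[R] E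

variable {R Λ E}

namespace Coinduced

instance : AddCommGroup (Coinduced R Λ E) :=
  inferInstanceAs (AddCommGroup (Λ →ₗ[R] E))

instance : Module R (Coinduced R Λ E) :=
  inferInstanceAs (Module R (Λ →ₗ[R] E))

instance : FunLike (Coinduced R Λ E) Λ E :=
  inferInstanceAs (FunLike (Λ →ₗ[R] E) Λ E)

instance : LinearMapClass (Coinduced R Λ E) R Λ E :=
  inferInstanceAs (LinearMapClass (Λ →ₗ[R] E) R Λ E)

instance : Module Λ (Coinduced R Λ E) where
  smul a f := LinearMap.comp f (LinearMap.mulRight R a)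
  one_smul f := DFunLike.ext _ _ fun x => congrArg f (mul_one x)
  mul_smul a b f := DFunLike.ext _ _ fun x => congrArg f (mul_assoc x a b).symm
  smul_zero _ := rfl
  smul_add _ _ _ := rfl
  add_smul a b f := DFunLike.ext _ _ fun x => (congrArg f (mul_add x a b)).trans (map_add f _ _)
  zero_smul f := DFunLike.ext _ _ fun x => (congrArg f (mul_zero x)).trans (map_zero f)

instance : IsScalarTower R Λ (Coinduced R Λ E) :=
  ⟨fun r a f => DFunLike.ext _ _ fun x =>
    (congrArg f (mul_smul_comm r x a)).trans (map_smul f r (x * a))⟩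

instance [IsNoetherianRing R] [Module.Finite R Λ] [Module.Finite R E] :
    Module.Finite Λ (Coinduced R Λ E) :=
  have : Module.Finite R (Coinduced R Λ E) := inferInstanceAs (Module.Finite R (Λ →ₗ[R] E))
  .of_restrictScalars_finite R Λ _

/-- The universal `R`-linear map from a `Λ`-module to `E`. -/
def counit : Coinduced R Λ E →ₗ[R] E :=
  LinearMap.applyₗ (1 : Λ)

theorem counit_smul (a : Λ) (f : Coinduced R Λ E) : counit (a • f) = f a :=
  congrArg f (one_mul a)

variable {M : Type} [AddCommGroup M] [Module Λ M]

theorem hom_ext {f g : M →ₗ[Λ] Coinduced R Λ E} (h : ∀ x, counit (f x) = counit (g x)) : f = g :=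
  LinearMap.ext fun x => DFunLike.ext _ _ fun a => by
    rw [← counit_smul, ← counit_smul, ← map_smul, ← map_smul, h]

variable [Module R M] [IsScalarTower R Λ M]

/-- The `Λ`-linear map corresponding to an `R`-linear map under coinduction. -/
def lift (ψ : M →ₗ[R] E) : M →ₗ[Λ] Coinduced R Λ E where
  toFun x := ψ ∘ₗ (LinearMap.toSpanSingleton Λ M x).restrictScalars R
  map_add' x y := DFunLike.ext _ _ fun a =>
    (congrArg ψ (smul_add a x y)).trans (map_add ψ _ _)
  map_smul' b x := DFunLike.ext _ _ fun a => congrArg ψ (mul_smul a b x).symm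

theorem counit_lift (ψ : M →ₗ[R] E) (x : M) : counit (lift (Λ := Λ) ψ x) = ψ x :=
  congrArg ψ (one_smul Λ x)

theorem injective (hE : Module.Injective R E) : Module.Injective Λ (Coinduced R Λ E) where
  out X Y _ _ _ _ i hi f := by
    let := Module.compHom X (algebraMap R Λ)
    let := Module.compHom Y (algebraMap R Λ)
    have : IsScalarTower R Λ X := .of_algebraMap_smul fun _ _ => rfl
    have : IsScalarTower R Λ Y := .of_algebraMap_smul fun _ _ => rfl
    obtain ⟨g, hg⟩ := hE.out (i.restrictScalars R) hi (counit ∘ₗ f.restrictScalars R)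
    refine ⟨lift g, fun x => LinearMap.congr_fun (f := lift g ∘ₗ i) (hom_ext fun x => ?_) x⟩
    exact (counit_lift g (i x)).trans (hg x)

end Coinduced

end Coinduced

section Linear

variable {R : Type} [CommRing R] {Λ : Type} [Ring Λ] [Algebra R Λ] {V : Type} [Quiver.{1} V]

namespace Repn

instance (X : Repn Λ V) (i : V) : Module R (X.M i) :=
  Module.compHom _ (algebraMap R Λ)

instance (X : Repn Λ V) (i : V) : IsScalarTower R Λ (X.M i) :=
  .of_algebraMap_smul fun _ _ => rfl

end Repn

instance (X Y : Repn Λ V) : Module R (RepHom X Y) where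
  smul r f := ⟨fun i => r • f.app i, fun a => by
    rw [LinearMap.smul_comp, ← f.comm]
    exact LinearMap.ext fun x => LinearMap.map_smul_of_tower _ r _⟩
  one_smul _ := RepHom.ext (funext fun _ => one_smul R _)
  mul_smul r s _ := RepHom.ext (funext fun _ => mul_smul r s _)
  smul_zero r := RepHom.ext (funext fun _ => smul_zero r)
  smul_add r _ _ := RepHom.ext (funext fun _ => smul_add r _ _)
  add_smul r s _ := RepHom.ext (funext fun _ => add_smul r s _)
  zero_smul _ := RepHom.ext (funext fun _ => zero_smul R _)

instance : Linear R (Repn Λ V) where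
  homModule X Y := inferInstanceAs (Module R (RepHom X Y))
  smul_comp _ _ _ r f g := RepHom.ext (funext fun i =>
    LinearMap.ext fun x => LinearMap.map_smul_of_tower (g.app i) r (f.app i x))
  comp_smul _ _ _ _ _ _ := rfl

namespace Repn

variable {X Y : Repn Λ V}

@[simp] theorem smul_app (r : R) (f : X ⟶ Y) (i : V) : (r • f).app i = r • f.app i := rfl

theorem finite_hom [Finite V] [IsNoetherianRing R] [Module.Finite R Λ] (hX : X.FG)
    (hY : Y.FG) : Module.Finite R (X ⟶ Y) := by
  have hfin {Z : Repn Λ V} (hZ : Z.FG) (i : V) : Module.Finite R (Z.M i) :=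
    have := hZ i
    .trans Λ _
  have := hfin hX
  have := hfin hY
  let φ : (X ⟶ Y) →ₗ[R] ∀ i, X.M i →ₗ[R] Y.M i :=
    { toFun f i := (f.app i).restrictScalars R
      map_add' _ _ := rfl
      map_smul' _ _ := rfl }
  exact .of_injective φ fun f g h =>
    hom_ext fun i x => LinearMap.congr_fun (f := φ f i) (congrFun h i) x

end Repn

end Linear

section FG

variable {Λ : Type} [Ring Λ] {V : Type} [Quiver.{1} V]

/-- The finitely generated representations. -/
def isFG (Λ : Type) [Ring Λ] (V : Type) [Quiver.{1} V] : ObjectProperty (Repn Λ V) :=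
  Repn.FG

instance : (isFG Λ V).IsClosedUnderQuotients where
  prop_of_epi f _ h i :=
    have := h i
    .of_surjective (RepHom.app f i) (Repn.epi_iff.1 ‹_› i)

instance [IsNoetherianRing Λ] : (isFG Λ V).IsClosedUnderSubobjects where
  prop_of_mono f _ h i :=
    have := h i
    .of_injective (RepHom.app f i) (Repn.mono_iff.1 ‹_› i)

variable {K : Type} (s : K → V) [∀ i j : V, Finite (Quiver.Path i j)] [Finite K]

variable (D : Type) [AddCommGroup D] [Module Λ D] [Module.Finite Λ D]

theorem freeRepn.fg : (freeRepn Λ s D).FG := fun i =>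
  inferInstanceAs (Module.Finite Λ (PathsFrom s i →₀ D))

theorem cofreeRepn.fg : (cofreeRepn Λ s D).FG := fun i =>
  inferInstanceAs (Module.Finite Λ (PathsTo s i → D))

end FG

section Nakayama

variable {R E Λ V : Type} [CommRing R] [AddCommGroup E] [Module R E] [Ring Λ] [Algebra R Λ]
  [Quiver.{1} V] [∀ i j : V, Finite (Quiver.Path i j)] {K : Type} (s : K → V)

/-- `freeRepn.lift` as a linear map in the images of the generators. -/
noncomputable def freeRepn.liftLinear (R : Type) [CommRing R] [Algebra R Λ] (W : Repn Λ V) :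
    (∀ k, W.M (s k)) →ₗ[R] (freeRepn Λ s Λ ⟶ W) where
  toFun := lift
  map_add' w w' := hom_ext fun k => by
    simp only [Repn.add_app, LinearMap.add_apply, lift_app_basis_nil, Pi.add_apply]
  map_smul' r w := hom_ext fun k => by
    simp only [Repn.smul_app, LinearMap.smul_apply, lift_app_basis_nil, Pi.smul_apply,
      RingHom.id_apply]

variable [Fintype K]

/-- The trace form pairing a free representation with the cofree one on the same vertices. -/
noncomputable def tracePairing (R E Λ : Type) [CommRing R] [AddCommGroup E] [Module R E] [Ring Λ]
    [Algebra R Λ] : (freeRepn Λ s Λ ⟶ cofreeRepn Λ s (Coinduced R Λ E)) →ₗ[R] E where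
  toFun h := ∑ k, Coinduced.counit
    (cofreeRepn.coord .nil (RepHom.app h (s k) (freeRepn.basis .nil)))
  map_add' h h' := by
    simp only [Repn.add_app, LinearMap.add_apply, map_add, Finset.sum_add_distrib]
  map_smul' r h := by
    simp only [Repn.smul_app, LinearMap.smul_apply, LinearMap.map_smul_of_tower, Finset.smul_sum,
      map_smul, RingHom.id_apply]

theorem tracePairing_apply {W : Repn Λ V} (f : freeRepn Λ s Λ ⟶ W)
    (g : W ⟶ cofreeRepn Λ s (Coinduced R Λ E)) :
    tracePairing s R E Λ (f ≫ g) = ∑ k, Coinduced.counit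
      (cofreeRepn.coord .nil (g.app (s k) (f.app (s k) (freeRepn.basis .nil)))) := rfl

theorem tracePairing_lift_single [DecidableEq K] {W : Repn Λ V}
    (g : W ⟶ cofreeRepn Λ s (Coinduced R Λ E)) (k : K) (w : W.M (s k)) :
    tracePairing s R E Λ (freeRepn.lift (Pi.single k w) ≫ g) =
      Coinduced.counit (cofreeRepn.coord .nil (g.app (s k) w)) := by
  rw [tracePairing_apply, Finset.sum_eq_single_of_mem k (Finset.mem_univ k),
    freeRepn.lift_app_basis_nil, Pi.single_eq_same]
  intro l _ hl
  rw [freeRepn.lift_app_basis_nil, Pi.single_eq_of_ne hl, map_zero, map_zero, map_zero]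

theorem isNakayamaPairing_tracePairing :
    AlmostSplit.IsNakayamaPairing (tracePairing s R E Λ) := by
  classical
  intro W φ
  let ψ k : W.M (s k) →ₗ[R] E :=
    φ ∘ₗ freeRepn.liftLinear s R W ∘ₗ LinearMap.single R (fun k => W.M (s k)) k
  refine ⟨cofreeRepn.lift fun k => Coinduced.lift (ψ k), fun f => ?_, fun g hg => ?_⟩
  · let w k := f.app (s k) (freeRepn.basis .nil)
    have hw : freeRepn.liftLinear s R W w = f :=
      freeRepn.hom_ext fun k => freeRepn.lift_app_basis_nil w k
    calc tracePairing s R E Λ (f ≫ cofreeRepn.lift fun k => Coinduced.lift (ψ k))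
        = ∑ k, ψ k (w k) := by
          simp only [tracePairing_apply, cofreeRepn.coord_nil_lift_app, Coinduced.counit_lift, w]
      _ = φ (freeRepn.liftLinear s R W (∑ k, Pi.single k (w k))) := by
          rw [map_sum, map_sum]
          rfl
      _ = φ f := by rw [LinearMap.sum_single_apply, hw]
  · have hcoord (k : K) : cofreeRepn.coord .nil ∘ₗ g.app (s k) = Coinduced.lift (ψ k) :=
      Coinduced.hom_ext fun w => by
        rw [LinearMap.comp_apply, ← tracePairing_lift_single, hg, Coinduced.counit_lift]
        rfl
    exact cofreeRepn.hom_ext fun k w => (LinearMap.congr_fun (hcoord k) w).trans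
      (cofreeRepn.coord_nil_lift_app (fun k => Coinduced.lift (ψ k)) k w).symm

theorem hasEnoughNakayamaPairings [Finite V] [IsArtinianRing R] [Module.Finite R Λ]
    (hE : AlmostSplit.IsDualizing R E) :
    AlmostSplit.HasEnoughNakayamaPairings (R := R) E (isFG Λ V) := by
  have := hE.finite
  have := Fintype.ofFinite V
  refine ⟨fun Z hZ => ?_, fun X hX => ?_⟩
  · choose n z hz using fun i => have := hZ i; Module.Finite.exists_fin (R := Λ) (M := Z.M i)
    let p : freeRepn Λ (fun k : Σ i, Fin (n i) => k.1) Λ ⟶ Z := freeRepn.lift fun k => z k.1 k.2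
    refine ⟨_, _, tracePairing _ R E Λ, p, isNakayamaPairing_tracePairing _, freeRepn.fg _ _,
      cofreeRepn.fg _ _, Repn.epi_iff.2 fun i => LinearMap.range_eq_top.1 ?_⟩
    refine top_le_iff.1 ((hz i).ge.trans (Submodule.span_le.2 ?_))
    rintro _ ⟨m, rfl⟩
    exact ⟨_, freeRepn.lift_app_basis_nil (fun k : Σ i, Fin (n i) => z k.1 k.2) ⟨i, m⟩⟩
  · choose n ψ hψ using fun i =>
      have := hX i
      have : Module.Finite R (X.M i) := .trans Λ _
      hE.exists_fin_forall_apply_eq_zero (X.M i)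
    let ι : X ⟶ cofreeRepn Λ (fun k : Σ i, Fin (n i) => k.1) (Coinduced R Λ E) :=
      cofreeRepn.lift fun k => Coinduced.lift (ψ k.1 k.2)
    refine ⟨_, _, tracePairing _ R E Λ, ι, isNakayamaPairing_tracePairing _, freeRepn.fg _ _,
      cofreeRepn.fg _ _, Repn.mono_iff.2 fun i => (injective_iff_map_eq_zero _).2 fun x hx => ?_⟩
    refine hψ i x fun m => ?_
    rw [← Coinduced.counit_lift (Λ := Λ) (ψ i m), ← cofreeRepn.coord_nil_lift_app
      (fun k : Σ i, Fin (n i) => Coinduced.lift (Λ := Λ) (ψ k.1 k.2)) ⟨i, m⟩ x, hx]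
    simp only [map_zero]

end Nakayama

/-! ### The monomorphism category -/

section Artinian

variable {Λ : Type} [Ring Λ] {V : Type} [Quiver.{1} V]

theorem Repn.strictMono_range_arrow (X : Repn Λ V) : StrictMono fun (S : Subobject X) (i : V) =>
    LinearMap.range (RepHom.app S.arrow i) := by
  have happ {S T : Subobject X} (h : S ≤ T) (i : V) :
      RepHom.app T.arrow i ∘ₗ RepHom.app (S.ofLE T h) i = RepHom.app S.arrow i := by
    rw [← Repn.comp_app, Subobject.ofLE_arrow]
  intro S T hST
  refine lt_of_le_not_ge (fun i => ?_) fun hTS => hST.not_ge ?_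
  · simpa only [← happ hST.le] using LinearMap.range_comp_le_range _ _
  · have hepi : Epi (S.ofLE T hST.le) := epi_iff.2 fun i y => by
      obtain ⟨x, hx⟩ := hTS i ⟨y, rfl⟩
      refine ⟨x, mono_iff.1 (inferInstance : Mono T.arrow) i ?_⟩
      rw [← hx, ← happ hST.le, LinearMap.comp_apply]
    have := isIso_of_mono_of_epi (S.ofLE T hST.le)
    exact Subobject.le_of_comm (inv (S.ofLE T hST.le)) (by simp)

theorem Repn.FG.isArtinianObject [Finite V] [IsArtinianRing Λ] {X : Repn Λ V} (hX : X.FG) :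
    IsArtinianObject X := by
  have (i : V) : WellFoundedLT (Submodule Λ (X.M i)) := have := hX i; inferInstance
  exact ⟨X.strictMono_range_arrow.wellFoundedLT⟩

end Artinian

section Mono

variable {Λ : Type} [Ring Λ] {V : Type} [Quiver.{1} V] [Fintype V] [∀ i j : V, Fintype (i ⟶ j)]

namespace Repn

theorem inMap_apply_s1 (X : Repn Λ V) (i : V) (x : (a : Σ j, j ⟶ i) → X.M a.1) :
    X.inMap i x = ∑ a, X.h a.2 (x a) := by
  simp [inMap]

theorem app_inMap {X Y : Repn Λ V} (f : X ⟶ Y) (i : V) (x : (a : Σ j, j ⟶ i) → X.M a.1) :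
    f.app i (X.inMap i x) = Y.inMap i fun a => f.app a.1 (x a) := by
  simp only [inMap_apply_s1, map_sum, f.comm_apply_s1]

theorem inMap_single_s1 (X : Repn Λ V) {i : V} [DecidableEq (Σ j, j ⟶ i)] (a : Σ j, j ⟶ i)
    (x : X.M a.1) : X.inMap i (Pi.single a x) = X.h a.2 x := by
  rw [inMap_apply_s1, Finset.sum_eq_single_of_mem a (Finset.mem_univ a), Pi.single_eq_same]
  intro b _ hb
  rw [Pi.single_eq_of_ne hb, map_zero]

theorem isMonoRep_iff_s1 {X : Repn Λ V} :
    X.IsMonoRep ↔ ∀ i (x : (a : Σ j, j ⟶ i) → X.M a.1), X.inMap i x = 0 → x = 0 :=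
  forall_congr' fun i => injective_iff_map_eq_zero (X.inMap i)

theorem IsMonoRep.of_mono {X Y : Repn Λ V} (f : X ⟶ Y) [Mono f] (hY : Y.IsMonoRep) :
    X.IsMonoRep :=
  isMonoRep_iff_s1.2 fun i x hx => funext fun a => by
    refine (injective_iff_map_eq_zero _).1 (mono_iff.1 ‹Mono f› a.1) _ (congrFun
      (isMonoRep_iff_s1.1 hY i (fun a => f.app a.1 (x a)) ?_) a)
    rw [← app_inMap, hx, map_zero]

theorem IsMonoRep.of_isSES {X Y Z : Repn Λ V} {f : RepHom X Y} {g : RepHom Y Z} (h : IsSES f g)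
    (hX : X.IsMonoRep) (hZ : Z.IsMonoRep) : Y.IsMonoRep := by
  refine isMonoRep_iff_s1.2 fun i y hy => ?_
  have hgy := isMonoRep_iff_s1.1 hZ i (fun a => g.app a.1 (y a)) (by rw [← app_inMap g, hy, map_zero])
  choose x hx using fun a => (h.2.2 a.1).ge (congrFun hgy a : y a ∈ LinearMap.ker (g.app a.1))
  obtain rfl : (fun a => f.app a.1 (x a)) = y := funext hx
  rw [← app_inMap f] at hy
  have hx0 := isMonoRep_iff_s1.1 hX i x ((injective_iff_map_eq_zero _).1 (h.1 i) _ hy)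
  simp only [hx0, Pi.zero_apply, map_zero]
  rfl

end Repn

/-- The monomorphism category, as a property of objects of the category of representations. -/
def isInMono (Λ : Type) [Ring Λ] (V : Type) [Quiver.{1} V] [Fintype V]
    [∀ i j : V, Fintype (i ⟶ j)] : ObjectProperty (Repn Λ V) :=
  Repn.InMono

instance [IsNoetherianRing Λ] : (isInMono Λ V).IsClosedUnderSubobjects where
  prop_of_mono f _ h := ⟨(isFG Λ V).prop_of_mono f h.1, h.2.of_mono f⟩

instance [IsNoetherianRing Λ] : (isInMono Λ V).IsStableUnderRetracts where
  of_retract r h := (isInMono Λ V).prop_of_mono r.i h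

instance [IsNoetherianRing Λ] : (isInMono Λ V).IsClosedUnderExtensions where
  prop_X₂_of_shortExact {S} hS h₁ h₃ := by
    have h : IsSES S.f S.g := isShortExact_iff_isSES.1 ⟨S.zero, hS⟩
    refine ⟨fun i => ?_, .of_isSES h h₁.2 h₃.2⟩
    have : Module.Finite Λ (S.X₁.M i) := h₁.1 i
    have : Module.Finite Λ (S.X₃.M i) := h₃.1 i
    exact Module.Finite.of_exact (LinearMap.exact_iff.2 (h.2.2 i).symm) (h.2.1 i)

end Mono

theorem Repn.IsMonoRep.exists_extension {Λ : Type} [Ring Λ] [Small.{0} Λ] {V : Type} [Quiver.{1} V]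
    [Fintype V] [∀ i j : V, Fintype (i ⟶ j)] {D : Type} [AddCommGroup D] [Module Λ D]
    [Module.Injective Λ D] {X : Repn Λ V} (hX : X.IsMonoRep) {i j : V} (a : i ⟶ j)
    (f : X.M i →ₗ[Λ] D) :
    ∃ g : X.M j →ₗ[Λ] D, (∀ x, g (X.h a x) = f x) ∧
      ∀ b : Σ k, k ⟶ j, b ≠ ⟨i, a⟩ → ∀ x, g (X.h b.2 x) = 0 := by
  classical
  obtain ⟨g, hg⟩ := Module.Injective.extension_property Λ _ _ _ (X.inMap j) (hX j)
    (f ∘ₗ LinearMap.proj (φ := fun b : Σ k, k ⟶ j => X.M b.1) ⟨i, a⟩)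
  have hgb (b : Σ k, k ⟶ j) (x : X.M b.1) :
      g (X.h b.2 x) = f (Pi.single (M := fun b : Σ k, k ⟶ j => X.M b.1) b x ⟨i, a⟩) := by
    rw [← X.inMap_single_s1 b, ← LinearMap.comp_apply, hg]
    rfl
  refine ⟨g, fun x => (hgb ⟨i, a⟩ x).trans (by rw [Pi.single_eq_same]), fun b hb x => ?_⟩
  rw [hgb, Pi.single_eq_of_ne hb.symm, map_zero]

section RightApproximation

variable {Λ : Type} [Ring Λ] {V : Type} [Quiver.{1} V] [∀ i j : V, Finite (Quiver.Path i j)]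
  {D : Type} [AddCommGroup D] [Module Λ D]

theorem freeRepn.isMonoRep {K : Type} {s : K → V} [Fintype V] [∀ i j : V, Fintype (i ⟶ j)] :
    (freeRepn Λ s D).IsMonoRep := by
  refine Repn.isMonoRep_iff_s1.2 fun i x hx => funext fun ⟨l, a⟩ => freeRepn.ext_coord fun k p => ?_
  have h := congrArg (freeRepn.coord (p.cons a)) hx
  rw [Repn.inMap_apply_s1, map_sum, Finset.sum_eq_single_of_mem ⟨l, a⟩ (Finset.mem_univ _),
    freeRepn.coord_cons_h, map_zero] at h
  · exact h.trans (map_zero _).symm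
  · rintro ⟨m, b⟩ - hb
    refine freeRepn.coord_h_eq_zero (fun q hq => hb ?_) _
    cases hq
    rfl

/-- The monomorphic cover of `N` determined by maps `ε i : N_i → D`, a version of the minimal
monomorphism of Ringel and Schmidmeier. Its component at `i` consists of the pairs `(m, y)` of an
element `m` of `N_i` and a family `y` of elements of `D`, indexed by the paths ending in `i`, whose
entry at the trivial path is `ε i m`. -/
noncomputable def mimo (N : Repn Λ V) (ε : ∀ i, N.M i →ₗ[Λ] D) : Repn Λ V where
  M i := LinearMap.eqLocus (ε i ∘ₗ LinearMap.fst Λ (N.M i) ((freeRepn Λ id D).M i))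
    (freeRepn.coord (s := id) (k := i) .nil ∘ₗ LinearMap.snd Λ (N.M i) ((freeRepn Λ id D).M i))
  h {i j} a := LinearMap.restrict
    ((N.h a ∘ₗ LinearMap.fst Λ _ _).prod ((freeRepn Λ id D).h a ∘ₗ LinearMap.snd Λ _ _ +
      freeRepn.single (s := id) j ∘ₗ ε j ∘ₗ N.h a ∘ₗ LinearMap.fst Λ _ _))
    fun x _ => by
      have h0 := freeRepn.coord_h_eq_zero (k := j) (q := .nil) (a := a)
        (fun p => (p.cons_ne_nil a).symm) x.2
      have h1 := freeRepn.coord_nil_single (Λ := Λ) (s := id) j (ε j (N.h a x.1))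
      exact ((congrArg₂ (· + ·) h0 h1).trans (zero_add _)).symm

namespace mimo

variable {N : Repn Λ V} {ε : ∀ i, N.M i →ₗ[Λ] D}

theorem fg [IsNoetherianRing Λ] [Finite V] [Module.Finite Λ D] (hN : N.FG) : (mimo N ε).FG :=
  fun i => by
    have := hN i
    have : Module.Finite Λ ((freeRepn Λ id D).M i) := freeRepn.fg id D i
    exact inferInstanceAs (Module.Finite Λ (LinearMap.eqLocus _ _))

/-- The projection of the monomorphic cover. -/
noncomputable def proj (N : Repn Λ V) (ε : ∀ i, N.M i →ₗ[Λ] D) : mimo N ε ⟶ N where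
  app _ := LinearMap.fst Λ _ _ ∘ₗ Submodule.subtype _
  comm _ := rfl

/-- The family of elements of `D` underlying an element of the monomorphic cover. -/
noncomputable def entries (i : V) : (mimo N ε).M i →ₗ[Λ] (freeRepn Λ id D).M i :=
  LinearMap.snd Λ _ _ ∘ₗ Submodule.subtype _

theorem entries_h {i j : V} (a : i ⟶ j) (x : (mimo N ε).M i) :
    entries j ((mimo N ε).h a x) = (freeRepn Λ id D).h a (entries i x) +
      freeRepn.single (s := id) j (ε j (N.h a ((proj N ε).app i x))) :=
  rfl

theorem coord_nil_entries (i : V) (x : (mimo N ε).M i) :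
    freeRepn.coord (s := id) (k := i) .nil (entries i x) = ε i ((proj N ε).app i x) :=
  x.2.symm

theorem ext {i : V} {x y : (mimo N ε).M i} (h₁ : (proj N ε).app i x = (proj N ε).app i y)
    (h₂ : entries i x = entries i y) : x = y :=
  Subtype.ext (Prod.ext h₁ h₂)

/-- The morphism into the monomorphic cover determined by its components. -/
noncomputable def lift {X : Repn Λ V} (u : X ⟶ N)
    {l : ∀ i, X.M i →ₗ[Λ] (freeRepn Λ id D).M i}
    (hnil : ∀ i x, freeRepn.coord (s := id) (k := i) .nil (l i x) = ε i (u.app i x))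
    (hl : ∀ {i j : V} (a : i ⟶ j) (x : X.M i), l j (X.h a x) = (freeRepn Λ id D).h a (l i x) +
      freeRepn.single (s := id) j (ε j (u.app j (X.h a x)))) :
    X ⟶ mimo N ε where
  app i := ((u.app i).prod (l i)).codRestrict _ fun x => (hnil i x).symm
  comm a := LinearMap.ext fun x => ext (u.comm_apply_s1 a x).symm
    ((hl a x).trans (by rw [u.comm_apply_s1]; rfl)).symm

variable [Fintype V] [∀ i j : V, Fintype (i ⟶ j)]

theorem isMonoRep (hε : ∀ i, Function.Injective (ε i)) : (mimo N ε).IsMonoRep := by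
  refine Repn.isMonoRep_iff_s1.2 fun i x hx => ?_
  have hN : N.inMap i (fun a => (proj N ε).app a.1 (x a)) = 0 := by
    rw [← Repn.app_inMap, hx, map_zero]
  have hF : (freeRepn Λ id D).inMap i (fun a => entries a.1 (x a)) = 0 := by
    have h := congrArg (entries i) hx
    simp only [Repn.inMap_apply_s1, map_sum, entries_h, Finset.sum_add_distrib] at h hN ⊢
    simpa only [← map_sum, hN, map_zero, add_zero] using h
  have hy (a : Σ j, j ⟶ i) : entries a.1 (x a) = 0 :=
    congrFun (Repn.isMonoRep_iff_s1.1 freeRepn.isMonoRep i _ hF) a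
  refine funext fun a => ext (hε a.1 ?_) ((hy a).trans (map_zero _).symm)
  rw [← coord_nil_entries, ← coord_nil_entries, hy]
  simp

end mimo

section Lift

variable [Fintype V] [∀ i j : V, Fintype (i ⟶ j)] [Small.{0} Λ] [Module.Injective Λ D]
  {X : Repn Λ V}

theorem Repn.IsMonoRep.exists_entries (hX : X.IsMonoRep) (e : ∀ i, X.M i →ₗ[Λ] D) :
    ∃ l : ∀ i, X.M i →ₗ[Λ] (freeRepn Λ id D).M i,
      (∀ i x, freeRepn.coord (s := id) (k := i) .nil (l i x) = e i x) ∧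
      ∀ {i j : V} (a : i ⟶ j) (x : X.M i), l j (X.h a x) =
        (freeRepn Λ id D).h a (l i x) + freeRepn.single (s := id) j (e j (X.h a x)) := by
  choose ext hext hext_of_ne using fun {i j : V} (a : i ⟶ j) (f : X.M i →ₗ[Λ] D) =>
    hX.exists_extension a f
  let c (k : V) {i : V} (p : Quiver.Path k i) : X.M i →ₗ[Λ] D :=
    Quiver.Path.rec (motive := fun i _ => X.M i →ₗ[Λ] D) (e k) (fun _ a g => ext a g) p
  refine ⟨fun i => freeRepn.pi (s := id) fun k p => c k p, fun i x => freeRepn.coord_pi ..,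
    fun {i j} a x => freeRepn.ext_coord fun k p => ?_⟩
  rw [freeRepn.coord_pi, map_add]
  cases p with
  | nil =>
    rw [freeRepn.coord_h_eq_zero fun p => (p.cons_ne_nil a).symm, zero_add]
    exact (freeRepn.coord_nil_single (s := id) _ _).symm
  | cons p b =>
    rw [freeRepn.coord_cons_single (s := id) p b, add_zero]
    by_cases hab : (⟨i, a⟩ : Σ k, k ⟶ j) = ⟨_, b⟩
    · cases hab
      rw [freeRepn.coord_cons_h, freeRepn.coord_pi]
      exact hext a (c k p) x
    · rw [freeRepn.coord_h_eq_zero fun q hq => hab (by cases hq; rfl)]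
      exact hext_of_ne b (c k p) ⟨i, a⟩ hab x

end Lift

theorem mimo.isRightApproximation_proj [Fintype V] [∀ i j : V, Fintype (i ⟶ j)] [IsNoetherianRing Λ]
    [Small.{0} Λ] [Module.Injective Λ D] [Module.Finite Λ D] {N : Repn Λ V} (hN : N.FG)
    {ε : ∀ i, N.M i →ₗ[Λ] D} (hε : ∀ i, Function.Injective (ε i)) :
    AlmostSplit.IsRightApproximation (isInMono Λ V) (mimo.proj N ε) := by
  refine ⟨⟨mimo.fg hN, mimo.isMonoRep hε⟩, fun X hX u => ?_⟩
  obtain ⟨l, hnil, hl⟩ := hX.2.exists_entries fun i => ε i ∘ₗ u.app i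
  exact ⟨mimo.lift u hnil hl, rfl⟩

end RightApproximation

section Coinduced

variable {R E Λ V : Type} [CommRing R] [AddCommGroup E] [Module R E] [Ring Λ] [Algebra R Λ]

theorem exists_injective_pi_coinduced [IsNoetherianRing R] [Module.Finite R Λ]
    (hE : AlmostSplit.IsDualizing R E) (M : Type) [AddCommGroup M] [Module R M] [Module Λ M]
    [IsScalarTower R Λ M] [Module.Finite Λ M] :
    ∃ (n : ℕ) (ε : M →ₗ[Λ] Fin n → Coinduced R Λ E), Function.Injective ε := by
  have : Module.Finite R M := .trans Λ M
  obtain ⟨n, f, hf⟩ := hE.exists_fin_forall_apply_eq_zero M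
  refine ⟨n, LinearMap.pi fun m => Coinduced.lift (f m),
    (injective_iff_map_eq_zero _).2 fun x hx => hf x fun m => ?_⟩
  rw [← Coinduced.counit_lift (Λ := Λ) (f m) x]
  exact (congrArg Coinduced.counit (congrFun hx m)).trans (map_zero _)

variable [Quiver.{1} V] [Fintype V] [∀ i j : V, Fintype (i ⟶ j)]
  [∀ i j : V, Finite (Quiver.Path i j)]

theorem exists_isRightApproximation_isInMono [IsNoetherianRing R] [Module.Finite R Λ]
    (hE : AlmostSplit.IsDualizing R E) {N : Repn Λ V} (hN : N.FG) :
    ∃ (T : Repn Λ V) (φ : T ⟶ N), AlmostSplit.IsRightApproximation (isInMono Λ V) φ := by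
  classical
  have := hE.finite
  have := Coinduced.injective (Λ := Λ) hE.injective
  have : IsNoetherianRing Λ := .of_finite R Λ
  choose n ε hε using fun i => have := hN i; exists_injective_pi_coinduced hE (Λ := Λ) (N.M i)
  exact ⟨_, _, mimo.isRightApproximation_proj (D := ∀ i, Fin (n i) → Coinduced R Λ E) hN
    (ε := fun i => LinearMap.single Λ _ i ∘ₗ ε i) fun i => (Pi.single_injective i).comp (hε i)⟩

end Coinduced

theorem isAlmostSplit_of_isAlmostSplitSequence {Λ V : Type} [Ring Λ] [Quiver.{1} V]
    [Fintype V] [∀ i j : V, Fintype (i ⟶ j)] {X Y Z : Repn Λ V} {f : X ⟶ Y} {g : Y ⟶ Z}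
    (h : AlmostSplit.IsAlmostSplitSequence (isInMono Λ V) f g) : IsAlmostSplit f g :=
  ⟨h.prop_left, h.prop_middle, h.prop_right, isShortExact_iff_isSES.1 h.isShortExact,
    fun hg => h.isRightAlmostSplit.1 (isSplitEpi_iff.2 hg),
    isIndec_iff.1 h.isIndec_left, isIndec_iff.1 h.isIndec_right,
    fun W hW u hu => h.isRightAlmostSplit.2 W hW u fun hs => hu (isSplitEpi_iff.1 hs),
    fun W hW u hu => h.isLeftAlmostSplit.2 W hW u fun hs => hu (isSplitMono_iff.1 hs)⟩

end QuivRep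

open QuivRep in
/-- For every finite acyclic quiver `Q` and every Artin algebra `Λ`, the
monomorphism category `mono(Q,Λ)` has almost split sequences: for every indecomposable
non-Ext-projective object there is an almost split sequence ending in it, and for every
indecomposable non-Ext-injective object there is an almost split sequence starting in it. -/
theorem mono_has_almost_split_sequences
    (V : Type) [Quiver.{1} V] [Fintype V] [∀ i j : V, Fintype (i ⟶ j)]
    (hacyc : IsAcyclic V)
    (R : Type) [CommRing R] [IsArtinianRing R]
    (Λ : Type) [Ring Λ] [Algebra R Λ] [Module.Finite R Λ] :
    (∀ Z : Repn Λ V, Z.InMono → Z.Indec → ¬ ExtProjective Z →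
      ∃ (X Y : Repn Λ V) (f : RepHom X Y) (g : RepHom Y Z), IsAlmostSplit f g) ∧
    (∀ X : Repn Λ V, X.InMono → X.Indec → ¬ ExtInjective X →
      ∃ (Y Z : Repn Λ V) (f : RepHom X Y) (g : RepHom Y Z), IsAlmostSplit f g) := by
  have := hacyc.finite_path
  have := IsArtinianRing.of_finite R Λ
  obtain ⟨E, _, _, hE⟩ := AlmostSplit.exists_isDualizing R
  have hEnough := hasEnoughNakayamaPairings (Λ := Λ) (V := V) hE
  have hfin (X : Repn Λ V) (hX : isInMono Λ V X) := Repn.finite_hom (R := R) hX.1 hX.1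
  refine ⟨fun Z hZ hZindec hZproj => ?_, fun X hX hXindec hXinj => ?_⟩
  · simp only [ExtProjective, not_forall] at hZproj
    obtain ⟨X, Y, hX, -, f, g, hfg, hg⟩ := hZproj
    obtain ⟨N, hN, hZN⟩ := hEnough.exists_isDefectPair_right hE hZ.1
    obtain ⟨T, φ, hφ⟩ := exists_isRightApproximation_isInMono hE hN
    obtain ⟨X', Y', f', g', h⟩ := AlmostSplit.exists_isAlmostSplitSequence_right R hfin hX hZ
      (isIndec_iff.2 hZindec) hZN hφ (isShortExact_iff_isSES.2 hfg) (isSplitEpi_iff.not.2 hg)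
    exact ⟨X', Y', f', g', isAlmostSplit_of_isAlmostSplitSequence h⟩
  · simp only [ExtInjective, not_forall] at hXinj
    obtain ⟨Y, Z, -, hZ, f, g, hfg, hf⟩ := hXinj
    obtain ⟨M, hM, hMX⟩ := hEnough.exists_isDefectPair_left hE
      (fun _ _ => Repn.finite_hom) hX.1
    have := hM.isArtinianObject
    have : (isInMono Λ V).Nonempty := ⟨X, hX⟩
    obtain ⟨S, φ, hφ⟩ := AlmostSplit.exists_isLeftApproximation (isInMono Λ V) M
    obtain ⟨Y', Z', f', g', h⟩ := AlmostSplit.exists_isAlmostSplitSequence_left R hfin hX hZ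
      (isIndec_iff.2 hXindec) hMX hφ (isShortExact_iff_isSES.2 hfg) (isSplitMono_iff.not.2 hf)
    exact ⟨Y', Z', f', g', isAlmostSplit_of_isAlmostSplitSequence h⟩
end
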